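/- arXiv:2505.04951 — 6 statements merged into one kernel-verified Lean document; each statement's English description precedes it below -/
import Mathlib

section
/- For every real m ≥ 1, the number of averaged primes between consecutive squares satisfies the quantitative Legendre-type bound π̄((m+1)²) − π̄(m²) ≥ (2m − 1)/(2·ln(m+1)). -/
open Finset Real

/-- `nthPrime n` is the n-th prime number with 1-based indexing:
`nthPrime 1 = 2`, `nthPrime 2 = 3`, `nthPrime 3 = 5`, ... -/
noncomputable def nthPrime (n : ℕ) : ℕ := Nat.nth Nat.Prime (n - 1)

/-- The arithmetic average of the first `n` primes. -/
noncomputable def avgPrime (n : ℕ) : ℝ := (1 / (n : ℝ)) * ∑ i ∈ Finset.Icc 1 n, (nthPrime i : ℝ)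

/-- The gap in the averaged primes. -/
noncomputable def avgGap (n : ℕ) : ℝ := avgPrime (n + 1) - avgPrime n

/-- The averaged-prime counting function `π̄(x) = #{i ≥ 1 : p̄_i ≤ x}`. -/
noncomputable def avgPrimeCount (x : ℝ) : ℕ := Nat.card {i : ℕ | 1 ≤ i ∧ avgPrime i ≤ x}

/-- The ordinary prime counting function for a real argument. -/
noncomputable def primeCount (x : ℝ) : ℕ := Nat.card {q : ℕ | q.Prime ∧ (q : ℝ) ≤ x}


namespace AvgPr
open ArithmeticFunction

lemma log_fact_eq (N : ℕ) :
    Real.log (N.factorial : ℝ) = ∑ d ∈ Finset.Ioc 0 N, vonMangoldt d * ((N / d : ℕ) : ℝ) := by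
  rw [← sum_Ioc_mul_zeta_eq_sum, vonMangoldt_mul_zeta]
  induction N with
  | zero => simp
  | succ n ih =>
    rw [Finset.sum_Ioc_succ_top (by omega), ← ih, Nat.factorial_succ]
    push_cast
    rw [Real.log_mul (by positivity) (by positivity)]
    simp [log_apply, add_comm]

lemma log_fact_div (N k : ℕ) :
    Real.log ((N / k).factorial : ℝ)
      = ∑ d ∈ Finset.Ioc 0 N, vonMangoldt d * ((N / d / k : ℕ) : ℝ) := by
  rw [log_fact_eq]
  have hs : Finset.Ioc 0 (N / k) ⊆ Finset.Ioc 0 N :=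
    Finset.Ioc_subset_Ioc_right (Nat.div_le_self _ _)
  rw [← Finset.sum_subset hs]
  · refine Finset.sum_congr rfl fun d _ => ?_
    rw [Nat.div_div_eq_div_mul, Nat.div_div_eq_div_mul, mul_comm k d]
  · intro d hd hd'
    simp only [Finset.mem_Ioc] at hd hd'
    have : N / d / k = 0 := by
      rw [Nat.div_div_eq_div_mul, mul_comm, ← Nat.div_div_eq_div_mul]
      apply Nat.div_eq_of_lt
      omega
    simp [this]

noncomputable def comb (N : ℕ) : ℝ :=
  Real.log (N.factorial : ℝ) - Real.log ((N / 2).factorial : ℝ) - Real.log ((N / 3).factorial : ℝ)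
    - Real.log ((N / 5).factorial : ℝ) + Real.log ((N / 30).factorial : ℝ)

lemma comb_eq (N : ℕ) : comb N = ∑ d ∈ Finset.Ioc 0 N, vonMangoldt d *
    (((N / d : ℕ) : ℝ) - ((N / d / 2 : ℕ) : ℝ) - ((N / d / 3 : ℕ) : ℝ) - ((N / d / 5 : ℕ) : ℝ)
      + ((N / d / 30 : ℕ) : ℝ)) := by
  unfold comb
  rw [log_fact_eq N, log_fact_div, log_fact_div, log_fact_div, log_fact_div,
    ← Finset.sum_sub_distrib, ← Finset.sum_sub_distrib, ← Finset.sum_sub_distrib,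
    ← Finset.sum_add_distrib]
  refine Finset.sum_congr rfl fun d _ => ?_
  ring

lemma comb_le_psi (N : ℕ) : comb N ≤ Chebyshev.psi N := by
  rw [comb_eq, Chebyshev.psi, Nat.floor_natCast]
  refine Finset.sum_le_sum fun d _ => ?_
  have h : N / d + N / d / 30 ≤ 1 + N / d / 2 + N / d / 3 + N / d / 5 := by omega
  have h' : ((N / d : ℕ) : ℝ) + ((N / d / 30 : ℕ) : ℝ) ≤ 1 + ((N / d / 2 : ℕ) : ℝ)
    + ((N / d / 3 : ℕ) : ℝ) + ((N / d / 5 : ℕ) : ℝ) := by exact_mod_cast h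
  have := vonMangoldt_nonneg (n := d)
  nlinarith

lemma psi_sub_le_comb (N : ℕ) :
    Chebyshev.psi N - Chebyshev.psi ((N / 6 : ℕ) : ℝ) ≤ comb N := by
  rw [comb_eq, Chebyshev.psi, Chebyshev.psi, Nat.floor_natCast, Nat.floor_natCast]
  rw [← Finset.sum_Ioc_consecutive (fun d => vonMangoldt d) (Nat.zero_le (N/6)) (Nat.div_le_self N 6)]
  rw [← Finset.sum_Ioc_consecutive _ (Nat.zero_le (N/6)) (Nat.div_le_self N 6)]
  have h1 : 0 ≤ ∑ d ∈ Finset.Ioc 0 (N/6), vonMangoldt d *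
    (((N / d : ℕ) : ℝ) - ((N / d / 2 : ℕ) : ℝ) - ((N / d / 3 : ℕ) : ℝ) - ((N / d / 5 : ℕ) : ℝ)
      + ((N / d / 30 : ℕ) : ℝ)) := by
    refine Finset.sum_nonneg fun d _ => ?_
    have h : N / d / 2 + N / d / 3 + N / d / 5 ≤ N / d + N / d / 30 := by omega
    have h' : ((N / d / 2 : ℕ) : ℝ)
      + ((N / d / 3 : ℕ) : ℝ) + ((N / d / 5 : ℕ) : ℝ) ≤ ((N / d : ℕ) : ℝ) + ((N / d / 30 : ℕ) : ℝ) := by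
      exact_mod_cast h
    have := vonMangoldt_nonneg (n := d)
    apply mul_nonneg this
    linarith
  have h2 : ∑ d ∈ Finset.Ioc (N/6) N, vonMangoldt d ≤ ∑ d ∈ Finset.Ioc (N/6) N, vonMangoldt d *
    (((N / d : ℕ) : ℝ) - ((N / d / 2 : ℕ) : ℝ) - ((N / d / 3 : ℕ) : ℝ) - ((N / d / 5 : ℕ) : ℝ)
      + ((N / d / 30 : ℕ) : ℝ)) := by
    refine Finset.sum_le_sum fun d hd => ?_
    simp only [Finset.mem_Ioc] at hd
    have hq1 : 1 ≤ N / d := (Nat.one_le_div_iff (by omega)).2 hd.2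
    have hq6 : N / d < 6 := by
      rw [Nat.div_lt_iff_lt_mul (by omega)]; omega
    have h : 1 + N / d / 2 + N / d / 3 + N / d / 5 ≤ N / d + N / d / 30 := by omega
    have h' : 1 + ((N / d / 2 : ℕ) : ℝ)
      + ((N / d / 3 : ℕ) : ℝ) + ((N / d / 5 : ℕ) : ℝ) ≤ ((N / d : ℕ) : ℝ) + ((N / d / 30 : ℕ) : ℝ) := by
      exact_mod_cast h
    have := vonMangoldt_nonneg (n := d)
    nlinarith
  linarith

noncomputable def gg (x : ℝ) : ℝ := x * Real.log x - x

lemma gg_mono {x y : ℝ} (hx : 1 ≤ x) (hxy : x ≤ y) : gg x ≤ gg y := by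
  unfold gg
  have hx0 : 0 < x := by linarith
  have hy0 : 0 < y := by linarith
  have h2 := Real.one_sub_inv_le_log_of_pos (x := y / x) (by positivity)
  rw [Real.log_div (by linarith) (by linarith), inv_div] at h2
  have h3 := Real.log_nonneg hx
  have hy : 0 < y := by linarith
  -- y log y - x log x = (y-x) log x + y (log y - log x) ≥ y (1 - x/y) = y - x
  have h4 : y * (1 - x / y) = y - x := by field_simp
  nlinarith

lemma fact_upper {n : ℕ} (hn : 1 ≤ n) :
    Real.log (n.factorial : ℝ) ≤ gg n + Real.log n / 2 + 1 := by
  obtain ⟨k, rfl⟩ : ∃ k, n = k + 1 := ⟨n - 1, by omega⟩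
  have h := Stirling.log_stirlingSeq'_antitone (Nat.zero_le k)
  simp only [Function.comp, Nat.succ_eq_add_one, zero_add] at h
  rw [Stirling.log_stirlingSeq_formula, Stirling.stirlingSeq_one, Real.log_div (Real.exp_pos 1).ne' (by positivity : √(2:ℝ) ≠ 0),
    Real.log_exp, Real.log_sqrt (by norm_num), Real.log_mul (by norm_num) (by positivity),
    Real.log_div (by positivity) (by positivity), Real.log_exp] at h
  unfold gg
  linarith

lemma fact_lower {n : ℕ} (hn : 1 ≤ n) :
    gg n + Real.log n / 2 + 0.8 ≤ Real.log (n.factorial : ℝ) := by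
  have h := Stirling.le_log_factorial_stirling (n := n) (by omega)
  have h2 : 1.6 ≤ Real.log (2 * Real.pi) := by
    rw [Real.le_log_iff_exp_le (by positivity)]
    have : Real.exp 1.6 = (Real.exp 1) ^ ((8:ℝ)/5) := by
      rw [← Real.exp_mul]; norm_num
    have h5 : (Real.exp 1.6)^5 = (Real.exp 1)^8 := by
      rw [← Real.exp_nat_mul, ← Real.exp_nat_mul]; norm_num
    have h6 : (Real.exp 1)^8 ≤ 2.7182818286^8 := by
      gcongr; exact Real.exp_one_lt_d9.le
    have h7 : (2.7182818286:ℝ)^8 ≤ (2 * Real.pi)^5 := by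
      calc (2.7182818286:ℝ)^8 ≤ (2*3.14)^5 := by norm_num
        _ ≤ _ := by gcongr; exact Real.pi_gt_d2.le
    exact le_of_pow_le_pow_left₀ (n := 5) (by norm_num) (by positivity) (by linarith)
  unfold gg
  linarith

lemma T_upper {N k : ℕ} (hk : 1 ≤ k) (hN : k ≤ N) :
    Real.log ((N / k).factorial : ℝ) ≤ gg (N / k) + Real.log (N / k) / 2 + 1 := by
  have hq : 1 ≤ N / k := (Nat.one_le_div_iff (by omega)).2 hN
  have h := fact_upper hq
  have h1 : ((N / k : ℕ) : ℝ) ≤ (N : ℝ) / k := Nat.cast_div_le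
  have hq' : (1 : ℝ) ≤ ((N / k : ℕ) : ℝ) := by exact_mod_cast hq
  have h2 := gg_mono hq' h1
  have h3 := Real.log_le_log (by linarith) h1
  linarith

lemma T_lower {N k : ℕ} (hk : 1 ≤ k) (hN : k ≤ N) :
    gg (N / k) - Real.log (N / k) / 2 + 0.4 ≤ Real.log ((N / k).factorial : ℝ) := by
  have hq : 1 ≤ N / k := (Nat.one_le_div_iff (by omega)).2 hN
  have h := fact_lower (n := N / k + 1) (by omega)
  have hk' : (0:ℝ) < k := by exact_mod_cast hk
  have h1 : (N : ℝ) / k ≤ ((N / k + 1 : ℕ) : ℝ) := by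
    rw [div_le_iff₀ hk']
    have := Nat.lt_mul_div_succ N (show 0 < k by omega)
    have h' : N ≤ (N / k + 1) * k := by rw [mul_comm]; omega
    exact_mod_cast h'
  have h1' : ((N / k : ℕ) : ℝ) ≤ (N : ℝ) / k := Nat.cast_div_le
  have hq' : (1 : ℝ) ≤ ((N / k : ℕ) : ℝ) := by exact_mod_cast hq
  have h2 := gg_mono (hq'.trans h1') h1
  rw [Nat.factorial_succ, Nat.cast_mul, Real.log_mul (by positivity) (by positivity)] at h
  have h3 : Real.log ((N / k + 1 : ℕ) : ℝ) ≤ Real.log (2 * ((N : ℝ) / k)) := by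
    apply Real.log_le_log (by positivity)
    push_cast
    linarith
  rw [Real.log_mul (by norm_num) (by linarith)] at h3
  have := Real.log_two_lt_d9
  linarith

noncomputable def AA : ℝ := (14 * Real.log 2 + 9 * Real.log 3 + 5 * Real.log 5) / 30

lemma gg_comb {x : ℝ} (hx : 0 < x) :
    gg x - gg (x / 2) - gg (x / 3) - gg (x / 5) + gg (x / 30) = AA * x := by
  unfold gg AA
  rw [show (30:ℝ) = 2 * 3 * 5 by norm_num]
  rw [Real.log_div hx.ne' (by norm_num), Real.log_div hx.ne' (by norm_num), Real.log_div hx.ne' (by norm_num),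
    Real.log_div hx.ne' (by norm_num), Real.log_mul (by norm_num) (by norm_num), Real.log_mul (by norm_num) (by norm_num)]
  ring

lemma log_comb {x : ℝ} (hx : 0 < x) :
    Real.log x + Real.log (x / 2) + Real.log (x / 3) + Real.log (x / 5) + Real.log (x / 30)
     = 5 * Real.log x - 2 * Real.log 30 := by
  rw [show (30:ℝ) = 2 * 3 * 5 by norm_num]
  rw [Real.log_div hx.ne' (by norm_num), Real.log_div hx.ne' (by norm_num), Real.log_div hx.ne' (by norm_num),
    Real.log_div hx.ne' (by norm_num), Real.log_mul (by norm_num) (by norm_num), Real.log_mul (by norm_num) (by norm_num)]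
  ring

lemma log30 : 3 ≤ Real.log 30 := by
  have : Real.log (2^9) ≤ Real.log (30^2) := Real.log_le_log (by norm_num) (by norm_num)
  rw [Real.log_pow, Real.log_pow] at this
  have := Real.log_two_gt_d9
  push_cast at *
  linarith

lemma comb_lower {N : ℕ} (hN : 30 ≤ N) : AA * N - 2.5 * Real.log N ≤ comb N := by
  have a1 := T_lower (N := N) (k := 1) (by norm_num) (by omega)
  have a2 := T_upper (N := N) (k := 2) (by norm_num) (by omega)
  have a3 := T_upper (N := N) (k := 3) (by norm_num) (by omega)
  have a5 := T_upper (N := N) (k := 5) (by norm_num) (by omega)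
  have a30 := T_lower (N := N) (k := 30) (by norm_num) (by omega)
  have hx : (0:ℝ) < N := by exact_mod_cast (by omega : 0 < N)
  have := gg_comb hx
  have := log_comb hx
  have := log30
  unfold comb
  push_cast at *
  simp only [Nat.div_one, div_one] at *
  linarith

lemma comb_upper {N : ℕ} (hN : 30 ≤ N) : comb N ≤ AA * N + 2.5 * Real.log N := by
  have a1 := T_upper (N := N) (k := 1) (by norm_num) (by omega)
  have a2 := T_lower (N := N) (k := 2) (by norm_num) (by omega)
  have a3 := T_lower (N := N) (k := 3) (by norm_num) (by omega)
  have a5 := T_lower (N := N) (k := 5) (by norm_num) (by omega)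
  have a30 := T_upper (N := N) (k := 30) (by norm_num) (by omega)
  have hx : (0:ℝ) < N := by exact_mod_cast (by omega : 0 < N)
  have := gg_comb hx
  have := log_comb hx
  have := log30
  unfold comb
  push_cast at *
  simp only [Nat.div_one, div_one] at *
  linarith

lemma AA_eq : AA = Real.log (2^14 * 3^9 * 5^5) / 30 := by
  unfold AA
  rw [Real.log_mul (by norm_num) (by norm_num), Real.log_mul (by norm_num) (by norm_num),
    Real.log_pow, Real.log_pow, Real.log_pow]
  push_cast; ring

lemma AA_lower : 0.9195 ≤ AA := by
  have : Real.log (2^199) ≤ Real.log ((2^14 * 3^9 * 5^5)^5) := Real.log_le_log (by norm_num) (by norm_num)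
  rw [Real.log_pow, Real.log_pow] at this
  have := Real.log_two_gt_d9
  rw [AA_eq]
  generalize Real.log (2^14 * 3^9 * 5^5) = t at *
  push_cast at *
  linarith

set_option exponentiation.threshold 400 in
lemma AA_upper : AA ≤ 0.9214 := by
  have : Real.log ((2^14 * 3^9 * 5^5)^8) ≤ Real.log (2^319) := Real.log_le_log (by norm_num) (by norm_num)
  rw [Real.log_pow, Real.log_pow] at this
  have := Real.log_two_lt_d9
  rw [AA_eq]
  generalize Real.log (2^14 * 3^9 * 5^5) = t at *
  push_cast at *
  linarith

lemma psi_lower {N : ℕ} (hN : 30 ≤ N) : 0.9195 * N - 2.5 * Real.log N ≤ Chebyshev.psi N := by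
  have := comb_lower hN
  have := comb_le_psi N
  have := AA_lower
  have hx : (0:ℝ) ≤ N := by positivity
  nlinarith

lemma psi_step {N : ℕ} (hN : 30 ≤ N) :
    Chebyshev.psi N ≤ Chebyshev.psi ((N / 6 : ℕ) : ℝ) + 0.9214 * N + 2.5 * Real.log N := by
  have := comb_upper hN
  have := psi_sub_le_comb N
  have := AA_upper
  have hx : (0:ℝ) ≤ N := by positivity
  nlinarith

def lchk : ℕ → ℕ → ℕ → Bool
  | 0, _, _ => true
  | f + 1, k, l =>
    Nat.ble (Nat.lcm l (k + 1)) (3 ^ (k + 1)) && lchk f (k + 1) (Nat.lcm l (k + 1))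

lemma lcmUpto_succ' (k : ℕ) : Nat.lcmUpto (k + 1) = Nat.lcm (Nat.lcmUpto k) (k + 1) := by
  unfold Nat.lcmUpto
  have : Finset.Icc 1 (k + 1) = insert (k + 1) (Finset.Icc 1 k) := by
    ext a; simp only [Finset.mem_Icc, Finset.mem_insert]; omega
  rw [this, Finset.lcm_insert, Nat.lcm_comm]
  rfl

lemma lchk_sound (f : ℕ) : ∀ k l, l = Nat.lcmUpto k → lchk f k l = true →
    ∀ j, k < j → j ≤ k + f → Nat.lcmUpto j ≤ 3 ^ j := by
  induction f with
  | zero => intro k l _ _ j h1 h2; omega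
  | succ f ih =>
    intro k l hl h j h1 h2
    simp only [lchk, Bool.and_eq_true, Nat.ble_eq] at h
    rw [hl, ← lcmUpto_succ'] at h
    rcases Nat.eq_or_lt_of_le (Nat.succ_le_of_lt h1) with h3 | h3
    · rw [← h3]; exact h.1
    · exact ih (k + 1) _ rfl h.2 j h3 (by omega)

set_option maxRecDepth 100000 in
lemma lchk_true : lchk 1700 0 1 = true := by decide +kernel

lemma lcmUpto_small {j : ℕ} (hj : j ≤ 1700) : Nat.lcmUpto j ≤ 3 ^ j := by
  rcases Nat.eq_zero_or_pos j with rfl | h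
  · simp [Nat.lcmUpto]
  · exact lchk_sound 1700 0 1 (by simp [Nat.lcmUpto]) lchk_true j h (by omega)

lemma psi_upper_nat (N : ℕ) : Chebyshev.psi N ≤ 1.12 * N := by
  induction N using Nat.strong_induction_on with
  | _ N ih =>
    by_cases hN : N ≤ 1700
    · rw [Chebyshev.psi_eq_log_lcmUpto]
      have h1 : (Nat.lcmUpto N : ℝ) ≤ 3 ^ N := by exact_mod_cast lcmUpto_small hN
      have h2 : (0 : ℝ) < Nat.lcmUpto N := by exact_mod_cast Nat.lcmUpto_pos N
      have h3 := Real.log_le_log h2 h1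
      rw [Real.log_pow] at h3
      have := Real.log_three_lt_d9
      have hx : (0:ℝ) ≤ N := by positivity
      nlinarith
    · push Not at hN
      have h1 := ih (N / 6) (by omega)
      have h2 := psi_step (N := N) (by omega)
      have h3 : ((N / 6 : ℕ) : ℝ) ≤ (N : ℝ) / 6 := by exact_mod_cast Nat.cast_div_le
      have hN' : (1700 : ℝ) < N := by exact_mod_cast hN
      have h4 : Real.log ((N:ℝ) / 2^11) ≤ N / 2^11 - 1 := Real.log_le_sub_one_of_pos (by positivity)
      rw [Real.log_div (by positivity) (by norm_num), Real.log_pow] at h4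
      have := Real.log_two_lt_d9
      push_cast at h4
      linarith

lemma psi_upper {x : ℝ} (hx : 0 ≤ x) : Chebyshev.psi x ≤ 1.12 * x := by
  rw [Chebyshev.psi_eq_psi_coe_floor]
  have := psi_upper_nat ⌊x⌋₊
  have := Nat.floor_le hx
  linarith

lemma theta_lower {N : ℕ} (hN : 10000 ≤ N) : 0.9 * N ≤ Chebyshev.theta N := by
  have hN' : (10000 : ℝ) ≤ N := by exact_mod_cast hN
  have hN0 : (0 : ℝ) ≤ N := by linarith
  have h1 := Chebyshev.psi_sub_theta_le_psi_add_psi_add_psi (N : ℝ)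
  have h2 := psi_lower (N := N) (by omega)
  have e2 := psi_upper (x := (N:ℝ) ^ (2:ℝ)⁻¹) (by positivity)
  have e3 := psi_upper (x := (N:ℝ) ^ (3:ℝ)⁻¹) (by positivity)
  have e5 := psi_upper (x := (N:ℝ) ^ (5:ℝ)⁻¹) (by positivity)
  have f5 : (N:ℝ) ^ (5:ℝ)⁻¹ ≤ (N:ℝ) ^ (3:ℝ)⁻¹ :=
    Real.rpow_le_rpow_of_exponent_le (by linarith) (by norm_num)
  have f2 : (N:ℝ) ^ (2:ℝ)⁻¹ ≤ N / 100 := by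
    have hs : ((N:ℝ) ^ (2:ℝ)⁻¹)^2 = N := by
      rw [← Real.rpow_natCast, ← Real.rpow_mul hN0]; norm_num
    have : 0 ≤ (N:ℝ) ^ (2:ℝ)⁻¹ := by positivity
    apply le_of_pow_le_pow_left₀ (n := 2) (by norm_num) (by positivity)
    rw [hs]; nlinarith
  have f3 : (N:ℝ) ^ (3:ℝ)⁻¹ ≤ N / 400 := by
    have hs : ((N:ℝ) ^ (3:ℝ)⁻¹)^3 = N := by
      rw [← Real.rpow_natCast, ← Real.rpow_mul hN0]; norm_num
    have : 0 ≤ (N:ℝ) ^ (3:ℝ)⁻¹ := by positivity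
    apply le_of_pow_le_pow_left₀ (n := 3) (by norm_num) (by positivity)
    rw [hs]
    have : (10000:ℝ)^2 ≤ (N:ℝ)^2 := by gcongr
    nlinarith
  have h4 : Real.log ((N:ℝ) / 2^13) ≤ N / 2^13 - 1 := Real.log_le_sub_one_of_pos (by positivity)
  rw [Real.log_div (by positivity) (by norm_num), Real.log_pow] at h4
  have := Real.log_two_lt_d9
  push_cast at h4
  linarith

lemma psi_lower' {N : ℕ} (hN : 10000 ≤ N) : 0.917 * N ≤ Chebyshev.psi N := by
  have hN' : (10000 : ℝ) ≤ N := by exact_mod_cast hN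
  have h2 := psi_lower (N := N) (by omega)
  have h4 : Real.log ((N:ℝ) / 2^13) ≤ N / 2^13 - 1 := Real.log_le_sub_one_of_pos (by positivity)
  rw [Real.log_div (by positivity) (by norm_num), Real.log_pow] at h4
  have := Real.log_two_lt_d9
  push_cast at h4
  linarith

/-- count of primes below j -/
def cnt (j : ℕ) : ℕ := Nat.count Nat.Prime j
/-- sum of primes below j -/
def psum (j : ℕ) : ℕ := ∑ p ∈ (Finset.range j).filter Nat.Prime, p

lemma plogsum (N : ℕ) : ∑ p ∈ (Finset.range (N + 1)).filter Nat.Prime, (p : ℝ) * Real.log p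
    = (N + 1) * Chebyshev.theta N - ∑ k ∈ Finset.range (N + 1), Chebyshev.theta k := by
  induction N with
  | zero => simp [Finset.range_one, Finset.filter_singleton, Nat.not_prime_zero]
  | succ n ih =>
    have ht : Chebyshev.theta ((n + 1 : ℕ) : ℝ) = Chebyshev.theta n
        + (if (n + 1).Prime then Real.log ((n + 1 : ℕ) : ℝ) else 0) := by
      rw [Chebyshev.theta, Chebyshev.theta, Nat.floor_natCast, Nat.floor_natCast,
        Finset.sum_filter, Finset.sum_filter, Finset.sum_Ioc_succ_top (by omega)]
    rw [Finset.sum_range_succ _ (n + 1), Finset.sum_filter, Finset.sum_range_succ, ← Finset.sum_filter,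
      ih, ht]
    split_ifs with h <;> push_cast <;> ring

lemma plogsum_lower {N : ℕ} (hN : 10000 ≤ N) :
    0.34 * (N : ℝ) ^ 2 ≤ ∑ p ∈ (Finset.range (N + 1)).filter Nat.Prime, (p : ℝ) * Real.log p := by
  rw [plogsum]
  have h1 : ∑ k ∈ Finset.range (N + 1), Chebyshev.theta k
      ≤ ∑ k ∈ Finset.range (N + 1), 1.12 * (k : ℝ) := by
    refine Finset.sum_le_sum fun k _ => ?_
    exact (Chebyshev.theta_le_psi _).trans (psi_upper_nat k)
  have h2 : ∀ n : ℕ, ∑ k ∈ Finset.range (n + 1), 1.12 * (k : ℝ) = 0.56 * n * (n + 1) := by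
    intro n
    induction n with
    | zero => simp
    | succ n ih => rw [Finset.sum_range_succ, ih]; push_cast; ring
  rw [h2] at h1
  have h3 := theta_lower hN
  have hN' : (10000 : ℝ) ≤ N := by exact_mod_cast hN
  nlinarith

lemma psum_lower {N : ℕ} (hN : 10000 ≤ N) :
    0.34 * (N : ℝ) ^ 2 ≤ (psum (N + 1) : ℝ) * Real.log N := by
  refine (plogsum_lower hN).trans ?_
  unfold psum
  push_cast
  rw [Finset.sum_mul]
  refine Finset.sum_le_sum fun p hp => ?_
  simp only [Finset.mem_filter, Finset.mem_range] at hp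
  have : (p : ℝ) ≤ N := by exact_mod_cast (by omega : p ≤ N)
  have h0 : (0 : ℝ) < p := by exact_mod_cast hp.2.pos
  gcongr

lemma cnt_lower {N : ℕ} (hN : 10000 ≤ N) : 0.917 * (N : ℝ) ≤ (cnt (N + 1) : ℝ) * Real.log N := by
  refine (psi_lower' hN).trans ?_
  exact Chebyshev.psi_le_primeCounting_mul_log N

/-- the key gap inequality, at the prime `P` -/
def Key (P : ℕ) : Prop :=
  ((cnt P : ℝ) * P - psum P) / ((cnt P : ℝ) * (cnt P + 1)) ≤ 0.87 * Real.log ((psum P : ℝ) / cnt P)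

lemma cnt_succ {P : ℕ} (hP : P.Prime) : cnt (P + 1) = cnt P + 1 := by
  simp [cnt, Nat.count_succ, hP]

lemma psum_succ {P : ℕ} (hP : P.Prime) : psum (P + 1) = psum P + P := by
  simp [psum, Finset.sum_filter, Finset.sum_range_succ, hP]

lemma key_large {P : ℕ} (hP : P.Prime) (hN : 10000 ≤ P) : Key P := by
  have c1 := cnt_lower hN
  have s1 := psum_lower hN
  rw [cnt_succ hP] at c1
  rw [psum_succ hP] at s1
  have hle : (cnt P : ℝ) ≤ P := by exact_mod_cast (Nat.count_le Nat.Prime : cnt P ≤ P)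
  push_cast at c1 s1
  unfold Key
  have hx : (10000 : ℝ) ≤ P := by exact_mod_cast hN
  generalize (P : ℝ) = x at *
  generalize (cnt P : ℝ) = n at *
  generalize (psum P : ℝ) = S at *
  have hl2 := Real.log_two_lt_d9
  have hl2' := Real.log_two_gt_d9
  have hL1 : 9.2 ≤ Real.log x := by
    have h1 : Real.log (2^93) ≤ Real.log (10000^7) := Real.log_le_log (by norm_num) (by norm_num)
    rw [Real.log_pow, Real.log_pow] at h1
    have h2 : Real.log 10000 ≤ Real.log x := Real.log_le_log (by norm_num) hx
    push_cast at h1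
    linarith
  have hL2 : Real.log x ≤ x / 2^13 + 8.02 := by
    have h4 : Real.log (x / 2^13) ≤ x / 2^13 - 1 := Real.log_le_sub_one_of_pos (by positivity)
    rw [Real.log_div (by linarith) (by norm_num), Real.log_pow] at h4
    push_cast at h4
    linarith
  set L := Real.log x with hL
  have hx0 : 0 < x := by linarith
  have hL0 : 0 < L := by linarith
  have hk : 899 ≤ n := by
    by_contra hc
    push Not at hc
    nlinarith
  have hn0 : 0 < n := by linarith
  have hSL : 0.339 * x ^ 2 ≤ S * L := by nlinarith
  have hS0 : 0 < S := by
    by_contra hc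
    push Not at hc
    nlinarith
  have hlogS : ∀ y, 0 < y → y * n ≤ S → Real.log y ≤ Real.log (S / n) := by
    intro y hy hyS
    apply Real.log_le_log hy
    rwa [le_div_iff₀ hn0]
  by_cases hu : (n + 1) * L ≤ 2 * x
  · have g1 : (n * x - S) / (n * (n + 1)) ≤ 0.69 * L := by
      rw [div_le_iff₀ (by positivity)]
      have hq : 0 ≤ 0.6892 * ((n+1) * L)^2 - ((n+1)*L) * x + 0.34 * x^2 := by
        have hd : 0 ≤ (n+1) * L - 0.917 * x := by linarith
        nlinarith [mul_nonneg hd hx0.le, sq_nonneg ((n+1) * L - 0.917 * x)]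
      have h3 : (n * x - S) * L ≤ 0.6892 * ((n+1) * L)^2 := by nlinarith
      have h4 : 0.6892 * ((n+1) * L)^2 ≤ 0.69 * L * (n * (n + 1)) * L := by
        have : 0.6892 * (n + 1) ≤ 0.69 * n := by linarith
        have h5 : 0 ≤ (n + 1) * L^2 := by positivity
        nlinarith
      exact le_of_mul_le_mul_right (h3.trans h4) hL0
    have g2 := hlogS (x / 6) (by positivity) (by
      have : x / 6 * n * L ≤ S * L := by nlinarith
      exact le_of_mul_le_mul_right this hL0)
    rw [Real.log_div hx0.ne' (by norm_num), ← hL] at g2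
    have g3 : Real.log (6^5) ≤ Real.log (2^13) := Real.log_le_log (by norm_num) (by norm_num)
    rw [Real.log_pow, Real.log_pow] at g3
    push_cast at g3
    linarith
  · push Not at hu
    have g1 : (n * x - S) / (n * (n + 1)) ≤ 0.51 * L := by
      rw [div_le_iff₀ (by positivity)]
      have h1 : x ≤ 0.51 * L * n := by nlinarith
      have h2 : (n + 1) * x ≤ 0.51 * L * n * (n + 1) := by nlinarith
      nlinarith
    have g2 := hlogS (x / (3 * L)) (by positivity) (by
      rw [div_mul_eq_mul_div, div_le_iff₀ (by positivity)]
      nlinarith)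
    rw [Real.log_div hx0.ne' (by positivity), Real.log_mul (by norm_num) (by positivity), ← hL] at g2
    have g3 := Real.log_three_lt_d9
    have g4 : Real.log (L / 2^3) ≤ L / 2^3 - 1 := Real.log_le_sub_one_of_pos (by positivity)
    rw [Real.log_div hL0.ne' (by norm_num), Real.log_pow] at g4
    push_cast at g4
    linarith

/-- primality test below 10^4 -/
def isP (j : ℕ) : Bool := Nat.ble 2 j && Nat.beq (Nat.gcd j (Nat.factorial (min (j - 1) 99))) 1

lemma isP_iff {j : ℕ} (hj : j < 10000) : isP j = true ↔ j.Prime := by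
  simp only [isP, Bool.and_eq_true, Nat.ble_eq, Nat.beq_eq]
  constructor
  · rintro ⟨h2, h⟩
    by_contra hp
    have h1 : j ≠ 1 := by omega
    have hlt := (Nat.not_prime_iff_minFac_lt h2).1 hp
    have hsq := Nat.minFac_sq_le_self (by omega) hp
    have h99 : j.minFac ≤ 99 := by nlinarith
    have hd : j.minFac ∣ Nat.factorial (min (j - 1) 99) :=
      Nat.dvd_factorial (Nat.minFac_pos j) (le_min (by omega) h99)
    have := Nat.dvd_gcd (Nat.minFac_dvd j) hd
    rw [h, Nat.dvd_one] at this
    exact h1 (Nat.minFac_eq_one_iff.1 this)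
  · intro hp
    refine ⟨hp.two_le, ?_⟩
    rw [← Nat.Coprime, hp.coprime_iff_not_dvd, hp.dvd_factorial]
    have := hp.two_le
    omega

/-- numeric form of the key inequality -/
def kchk (n S q : ℕ) : Bool :=
  Nat.ble (n * q * 8000000) (S * 8000000 + 87 * 6931 * Nat.log2 (S ^ 8 / n ^ 8) * (n * (n + 1)))

def go : ℕ → ℕ → ℕ → ℕ → Bool
  | 0, _, _, _ => true
  | f + 1, j, n, S =>
    bif isP j then kchk n S j && go f (j + 1) (n + 1) (S + j) else go f (j + 1) n S

set_option maxRecDepth 100000 in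
lemma go_true : go 9987 13 5 28 = true := by decide +kernel

lemma kchk_sound {n S q : ℕ} (hn : 0 < n) (hS : n ≤ S) (h : kchk n S q = true) :
    ((n : ℝ) * q - S) / ((n : ℝ) * (n + 1)) ≤ 0.87 * Real.log ((S : ℝ) / n) := by
  simp only [kchk, Nat.ble_eq] at h
  set k := Nat.log2 (S ^ 8 / n ^ 8) with hk
  have hpos : S ^ 8 / n ^ 8 ≠ 0 := by
    have : 1 ≤ S ^ 8 / n ^ 8 := (Nat.one_le_div_iff (by positivity)).2 (by gcongr)
    omega
  have h1 : 2 ^ k ≤ S ^ 8 / n ^ 8 := Nat.log2_self_le hpos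
  have h2 : (2:ℝ) ^ k ≤ ((S : ℝ) / n) ^ 8 := by
    rw [div_pow]
    calc (2:ℝ) ^ k ≤ ((S ^ 8 / n ^ 8 : ℕ) : ℝ) := by exact_mod_cast h1
      _ ≤ _ := by
        refine Nat.cast_div_le.trans ?_
        push_cast
        exact le_rfl
  have h3 := Real.log_le_log (by positivity) h2
  rw [Real.log_pow, Real.log_pow] at h3
  have hl := Real.log_two_gt_d9
  have hk0 : (0:ℝ) ≤ k := by positivity
  have hn' : (0:ℝ) < n := by exact_mod_cast hn
  have h4 : 0.6931 * (k : ℝ) / 8 ≤ Real.log ((S : ℝ) / n) := by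
    push_cast at h3
    nlinarith
  have h5 : ((n : ℝ) * q - S) / ((n : ℝ) * (n + 1)) ≤ 0.87 * (0.6931 * (k : ℝ) / 8) := by
    rw [div_le_iff₀ (by positivity)]
    have : (n : ℝ) * q * 8000000 ≤ S * 8000000 + 87 * 6931 * k * (n * (n + 1)) := by exact_mod_cast h
    linarith
  linarith

lemma cnt_step (j : ℕ) : cnt (j + 1) = cnt j + if j.Prime then 1 else 0 := by
  simp [cnt, Nat.count_succ]

lemma psum_step (j : ℕ) : psum (j + 1) = psum j + if j.Prime then j else 0 := by
  simp [psum, Finset.sum_filter, Finset.sum_range_succ]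

lemma go_sound (f : ℕ) : ∀ j n S, n = cnt j → S = psum j → 0 < n → n ≤ S → j + f ≤ 10000 →
    go f j n S = true → ∀ P, P.Prime → j ≤ P → P < j + f → Key P := by
  induction f with
  | zero => intro j n S _ _ _ _ _ _ P _ h1 h2; omega
  | succ f ih =>
    intro j n S hn hS hn0 hnS hf h P hP h1 h2
    rw [go] at h
    by_cases hj : j.Prime
    · rw [(isP_iff (by omega)).2 hj, cond_true, Bool.and_eq_true] at h
      rcases Nat.eq_or_lt_of_le h1 with h3 | h3
      · have := kchk_sound hn0 hnS h.1
        unfold Key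
        rw [← h3, ← hn, ← hS]
        exact this
      · have := hj.two_le
        exact ih (j + 1) _ _ (by rw [cnt_step, if_pos hj, hn]) (by rw [psum_step, if_pos hj, hS])
          (by omega) (by omega) (by omega) h.2 P hP h3 (by omega)
    · have hne : j ≠ P := by rintro rfl; exact hj hP
      rw [show isP j = false by
        rw [← Bool.not_eq_true, isP_iff (by omega)]; exact hj, cond_false] at h
      exact ih (j + 1) _ _ (by rw [cnt_step, if_neg hj, hn]; rfl) (by rw [psum_step, if_neg hj, hS]; rfl)
          (by omega) (by omega) (by omega) h P hP (by omega) (by omega)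

lemma cnt13 : cnt 13 = 5 := by
  simp only [cnt]; decide

lemma psum13 : psum 13 = 28 := by
  simp only [psum]; decide

lemma key_all {P : ℕ} (hP : P.Prime) (h13 : 13 ≤ P) : Key P := by
  by_cases h : P < 10000
  · exact go_sound 9987 13 5 28 cnt13.symm psum13.symm (by norm_num) (by norm_num) (by norm_num)
      go_true P hP h13 (by omega)
  · exact key_large hP (by omega)

lemma sum_nth (i : ℕ) : ∑ j ∈ Finset.Icc 1 i, nthPrime j = psum (Nat.nth Nat.Prime i) := by
  induction i with
  | zero => simp [psum]; decide
  | succ i ih =>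
    rw [Finset.sum_Icc_succ_top (by omega), ih]
    unfold psum
    rw [Nat.filter_range_nth_eq_insert_of_infinite Nat.infinite_setOfPred_prime,
      Finset.sum_insert (by simp)]
    simp [nthPrime, add_comm]

lemma cnt_nth (i : ℕ) : cnt (Nat.nth Nat.Prime i) = i :=
  Nat.count_nth_of_infinite Nat.infinite_setOfPred_prime i

lemma avg_eq (i : ℕ) : avgPrime i = (psum (Nat.nth Nat.Prime i) : ℝ) / i := by
  unfold avgPrime
  rw [← sum_nth]; push_cast; ring

lemma avg_succ (i : ℕ) :
    avgPrime (i + 1) = ((psum (Nat.nth Nat.Prime i) : ℝ) + Nat.nth Nat.Prime i) / (i + 1) := by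
  unfold avgPrime
  rw [Finset.sum_Icc_succ_top (by omega), ← sum_nth]; push_cast
  simp [nthPrime]; ring

lemma psum_lt (i : ℕ) (hi : 1 ≤ i) :
    psum (Nat.nth Nat.Prime i) < i * Nat.nth Nat.Prime i := by
  rw [← sum_nth]
  calc ∑ j ∈ Finset.Icc 1 i, nthPrime j < ∑ j ∈ Finset.Icc 1 i, Nat.nth Nat.Prime i := by
        apply Finset.sum_lt_sum_of_nonempty ⟨1, by simp [hi]⟩
        intro j hj
        simp only [Finset.mem_Icc] at hj
        exact Nat.nth_strictMono Nat.infinite_setOfPred_prime (by omega)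
    _ = _ := by simp

lemma avg_gap (i : ℕ) (hi : 1 ≤ i) : avgPrime (i + 1) - avgPrime i
    = ((i : ℝ) * Nat.nth Nat.Prime i - psum (Nat.nth Nat.Prime i)) / ((i : ℝ) * (i + 1)) := by
  rw [avg_succ, avg_eq]
  have : (0:ℝ) < i := by exact_mod_cast hi
  field_simp; ring

lemma avg_lt (i : ℕ) (hi : 1 ≤ i) : avgPrime i < avgPrime (i + 1) := by
  have h := avg_gap i hi
  have h1 : (psum (Nat.nth Nat.Prime i) : ℝ) < i * Nat.nth Nat.Prime i := by exact_mod_cast psum_lt i hi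
  have : (0:ℝ) < i := by exact_mod_cast hi
  have : 0 < ((i : ℝ) * Nat.nth Nat.Prime i - psum (Nat.nth Nat.Prime i)) / ((i : ℝ) * (i + 1)) :=
    div_pos (by linarith) (by positivity)
  linarith

lemma nth5 : Nat.nth Nat.Prime 5 = 13 := by
  rw [← cnt13]; exact Nat.nth_count (by norm_num)

lemma avg_key (i : ℕ) (hi : 5 ≤ i) :
    avgPrime (i + 1) - avgPrime i ≤ 0.87 * Real.log (avgPrime i) := by
  have h13 : 13 ≤ Nat.nth Nat.Prime i := by
    rw [← nth5]; exact Nat.nth_monotone Nat.infinite_setOfPred_prime hi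
  have := key_all (Nat.prime_nth_prime i) h13
  unfold Key at this
  rw [cnt_nth] at this
  rw [avg_gap i (by omega), avg_eq]
  exact this

lemma avg_mono {i j : ℕ} (hi : 1 ≤ i) (hij : i ≤ j) : avgPrime i ≤ avgPrime j := by
  induction j, hij using Nat.le_induction with
  | base => exact le_rfl
  | succ k hk ih => exact ih.trans (avg_lt k (by omega)).le

lemma nth_ge (i : ℕ) : i ≤ Nat.nth Nat.Prime i :=
  (Nat.nth_strictMono Nat.infinite_setOfPred_prime).id_le i

lemma avg_ge (i : ℕ) (hi : 1 ≤ i) : ((i : ℝ) - 1) / 2 ≤ avgPrime i := by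
  have h : ∀ i : ℕ, (i : ℝ) * (i - 1) / 2 ≤ ∑ j ∈ Finset.Icc 1 i, (nthPrime j : ℝ) := by
    intro i
    induction i with
    | zero => simp
    | succ k ih =>
      rw [Finset.sum_Icc_succ_top (by omega)]
      have : (k : ℝ) ≤ nthPrime (k + 1) := by exact_mod_cast nth_ge k
      push_cast
      linarith
  have h0 : (0:ℝ) < i := by exact_mod_cast hi
  unfold avgPrime
  rw [one_div, ← div_eq_inv_mul, le_div_iff₀ h0]
  linarith [h i]

lemma count_char (x : ℝ) (i : ℕ) (hi : 1 ≤ i) : avgPrime i ≤ x ↔ i ≤ avgPrimeCount x := by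
  have hfin : {i : ℕ | 1 ≤ i ∧ avgPrime i ≤ x}.Finite := by
    apply (Set.finite_Iic (⌊2 * x + 1⌋₊)).subset
    rintro j ⟨hj, hjx⟩
    have := avg_ge j hj
    exact Nat.le_floor (by linarith)
  unfold avgPrimeCount
  rw [Nat.card_coe_set_eq]
  constructor
  · intro h
    have hs : (Finset.Icc 1 i : Set ℕ) ⊆ {i : ℕ | 1 ≤ i ∧ avgPrime i ≤ x} := by
      intro j hj
      simp only [Finset.coe_Icc, Set.mem_Icc] at hj
      exact ⟨hj.1, (avg_mono hj.1 hj.2).trans h⟩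
    have := Set.ncard_le_ncard hs hfin
    rw [Set.ncard_coe_finset] at this
    simpa using this
  · intro h
    by_contra hc
    push Not at hc
    have hs : {i : ℕ | 1 ≤ i ∧ avgPrime i ≤ x} ⊆ (Finset.Ico 1 i : Set ℕ) := by
      rintro j ⟨hj, hjx⟩
      simp only [Finset.coe_Ico, Set.mem_Ico]
      refine ⟨hj, ?_⟩
      by_contra hji
      push Not at hji
      linarith [avg_mono hi hji]
    have := Set.ncard_le_ncard hs (Finset.finite_toSet _)
    rw [Set.ncard_coe_finset] at this
    simp at this
    omega

lemma avg_of {q n S : ℕ} (hq : q.Prime) (hn : Nat.count Nat.Prime q = n)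
    (hS : ∑ p ∈ (Finset.range q).filter Nat.Prime, p = S) : avgPrime n = (S : ℝ) / n := by
  rw [avg_eq, ← hn, Nat.nth_count hq, ← hS]; rfl

lemma avg2 : avgPrime 2 = 5 / 2 := by
  have := avg_of (q := 5) (n := 2) (S := 5) (by norm_num) (by decide) (by decide)
  rw [this]; norm_num
lemma avg3 : avgPrime 3 = 10 / 3 := by
  have := avg_of (q := 7) (n := 3) (S := 10) (by norm_num) (by decide) (by decide)
  rw [this]; norm_num
lemma avg4 : avgPrime 4 = 17 / 4 := by
  have := avg_of (q := 11) (n := 4) (S := 17) (by norm_num) (by decide) (by decide)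
  rw [this]; norm_num
lemma avg5 : avgPrime 5 = 28 / 5 := by
  have := avg_of (q := 13) (n := 5) (S := 28) (by norm_num) (by decide) (by decide)
  rw [this]; norm_num
lemma avg6 : avgPrime 6 = 41 / 6 := by
  have := avg_of (q := 17) (n := 6) (S := 41) (by norm_num) (by decide) (by decide)
  rw [this]; norm_num
lemma avg7 : avgPrime 7 = 58 / 7 := by
  have := avg_of (q := 19) (n := 7) (S := 58) (by norm_num) (by decide) (by decide)
  rw [this]; norm_num

lemma small_case (m : ℝ) (hm : 1 ≤ m) (h24 : m < 2.4) :
    (avgPrimeCount ((m + 1) ^ 2) : ℝ) - (avgPrimeCount (m ^ 2) : ℝ) ≥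
      (2 * m - 1) / (2 * Real.log (m + 1)) := by
  have hL : 0 < Real.log (m + 1) := Real.log_pos (by linarith)
  have h1 : (2 * m - 1) / (2 * Real.log (m + 1)) ≤ 2 := by
    rw [div_le_iff₀ (by positivity)]
    have h2 := Real.one_sub_inv_le_log_of_pos (x := (m + 1) / 2) (by linarith)
    rw [Real.log_div (by linarith) (by norm_num), inv_div] at h2
    have := Real.log_two_gt_d9
    have h3 : 2 / (m + 1) ≤ (6.77 - (2 * m - 1)) / 4 := by
      rw [div_le_iff₀ (by linarith)]; nlinarith
    linarith
  have h2 : avgPrimeCount (m ^ 2) + 2 ≤ avgPrimeCount ((m + 1) ^ 2) := by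
    by_cases c1 : m ^ 2 < 5 / 2
    · have a : ¬ (2 ≤ avgPrimeCount (m ^ 2)) := by
        rw [← count_char _ 2 (by norm_num), avg2]; linarith
      have b : 3 ≤ avgPrimeCount ((m + 1) ^ 2) := by
        rw [← count_char _ 3 (by norm_num), avg3]; nlinarith
      omega
    · by_cases c2 : m ^ 2 < 17 / 4
      · have a : ¬ (4 ≤ avgPrimeCount (m ^ 2)) := by
          rw [← count_char _ 4 (by norm_num), avg4]; linarith
        have b : 5 ≤ avgPrimeCount ((m + 1) ^ 2) := by
          rw [← count_char _ 5 (by norm_num), avg5]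
          have : 1.5 ≤ m := by nlinarith
          nlinarith
        omega
      · have a : ¬ (6 ≤ avgPrimeCount (m ^ 2)) := by
          rw [← count_char _ 6 (by norm_num), avg6]; nlinarith
        have b : 7 ≤ avgPrimeCount ((m + 1) ^ 2) := by
          rw [← count_char _ 7 (by norm_num), avg7]
          have : 2 ≤ m := by nlinarith
          nlinarith
        omega
  have h3 : (avgPrimeCount (m ^ 2) : ℝ) + 2 ≤ avgPrimeCount ((m + 1) ^ 2) := by exact_mod_cast h2
  linarith

lemma large_case (m : ℝ) (h24 : 2.4 ≤ m) :
    (avgPrimeCount ((m + 1) ^ 2) : ℝ) - (avgPrimeCount (m ^ 2) : ℝ) ≥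
      (2 * m - 1) / (2 * Real.log (m + 1)) := by
  have hL : 0 < Real.log (m + 1) := Real.log_pos (by linarith)
  have hA : 5 ≤ avgPrimeCount (m ^ 2) := by
    rw [← count_char _ 5 (by norm_num), avg5]; nlinarith
  have hA1 : avgPrime (avgPrimeCount (m ^ 2)) ≤ m ^ 2 := by
    rw [count_char _ _ (by omega)]
  have hB1 : (m + 1) ^ 2 < avgPrime (avgPrimeCount ((m + 1) ^ 2) + 1) := by
    rw [← not_le, count_char _ _ (by omega)]; omega
  have hAB : avgPrimeCount (m ^ 2) ≤ avgPrimeCount ((m + 1) ^ 2) := by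
    rw [← count_char _ _ (by omega)]
    exact hA1.trans (by nlinarith)
  have hBle : ∀ i, 1 ≤ i → i ≤ avgPrimeCount ((m + 1) ^ 2) → avgPrime i ≤ (m + 1) ^ 2 :=
    fun i h1 h2 => (count_char _ i h1).2 h2
  generalize avgPrimeCount ((m + 1) ^ 2) = B at *
  generalize avgPrimeCount (m ^ 2) = A at *
  have hstep : ∀ i, 5 ≤ i → i ≤ B → avgPrime (i + 1) - avgPrime i ≤ 1.74 * Real.log (m + 1) := by
    intro i h5 hiB
    have h1 := avg_key i h5
    have hp : 0 < avgPrime i := by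
      have := avg_mono (i := 5) (j := i) (by norm_num) h5
      rw [avg5] at this; linarith
    have h2 := Real.log_le_log hp (hBle i (by omega) hiB)
    rw [Real.log_pow] at h2
    push_cast at h2
    linarith
  have htel : ∀ d, A + d ≤ B + 1 → avgPrime (A + d) - avgPrime A ≤ d * (1.74 * Real.log (m + 1)) := by
    intro d
    induction d with
    | zero => intro _; simp
    | succ d ih =>
      intro h
      have h1 := ih (by omega)
      have h2 := hstep (A + d) (by omega) (by omega)
      rw [← add_assoc]
      push_cast
      linarith
  have hfin := htel (B + 1 - A) (by omega)
  rw [show A + (B + 1 - A) = B + 1 by omega, Nat.cast_sub (by omega)] at hfin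
  push_cast at hfin
  have h67 : Real.log (m + 1) ≤ (m + 1) / 6.7 + 0.92 := by
    have h4 : Real.log ((m + 1) / 6.7) ≤ (m + 1) / 6.7 - 1 :=
      Real.log_le_sub_one_of_pos (by apply div_pos <;> linarith)
    rw [Real.log_div (by linarith) (by norm_num)] at h4
    have g3 : Real.log (6.7^4) ≤ Real.log (2^11) := Real.log_le_log (by norm_num) (by norm_num)
    rw [Real.log_pow, Real.log_pow] at g3
    have := Real.log_two_lt_d9
    push_cast at g3
    linarith
  rw [ge_iff_le, div_le_iff₀ (by positivity)]
  generalize Real.log (m + 1) = L at *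
  have e1 : 2 * m + 1 ≤ ((B : ℝ) + 1 - A) * (1.74 * L) := by nlinarith
  have e2 : ((B : ℝ) - A) * (2 * L) = (((B : ℝ) + 1 - A) * (1.74 * L)) * (2 / 1.74) - 2 * L := by
    ring
  rw [e2]
  generalize ((B : ℝ) + 1 - A) * (1.74 * L) = X at e1 ⊢
  norm_num at e1 h67 h24 ⊢
  linarith

end AvgPr

theorem stmt12 (m : ℝ) (hm : 1 ≤ m) :
    (avgPrimeCount ((m + 1) ^ 2) : ℝ) - (avgPrimeCount (m ^ 2) : ℝ) ≥
      (2 * m - 1) / (2 * Real.log (m + 1)) := by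
  by_cases h : m < 2.4
  · exact AvgPr.small_case m hm h
  · exact AvgPr.large_case m (by linarith)
end

section
/- For every integer m ≥ 2, the averaged-prime analogue of the Oppermann conjecture holds: π̄((m + 1/2)²) > π̄(m²) and π̄(m²) > π̄((m − 1/2)²). -/
open Finset Real

lemma aux_nth_le {n B : ℕ} (h : n < Nat.count Nat.Prime (B + 1)) : Nat.nth Nat.Prime n ≤ B :=
  Nat.lt_succ_iff.mp (Nat.nth_lt_of_lt_count h)

lemma aux_odd (k : ℕ) : 2 * k + 1 ≤ Nat.nth Nat.Prime k := by
  induction k with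
  | zero => have := (Nat.prime_nth_prime 0).two_le; omega
  | succ k ih =>
    have hlt : Nat.nth Nat.Prime k < Nat.nth Nat.Prime (k + 1) :=
      Nat.nth_strictMono Nat.infinite_setOfPred_prime (Nat.lt_succ_self k)
    have h2 : 2 ≤ Nat.nth Nat.Prime k := (Nat.prime_nth_prime k).two_le
    rcases (Nat.prime_nth_prime (k + 1)).eq_two_or_odd with h | h
    · omega
    · omega

lemma aux_sum (n : ℕ) : n ^ 2 ≤ ∑ i ∈ Finset.Icc 1 n, nthPrime i := by
  induction n with
  | zero => simp
  | succ n ih =>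
    rw [Finset.sum_Icc_succ_top (by omega)]
    have : 2 * n + 1 ≤ nthPrime (n + 1) := by simpa [nthPrime] using aux_odd n
    nlinarith

lemma aux_avg (n : ℕ) (hn : 1 ≤ n) : (n : ℝ) ≤ avgPrime n := by
  unfold avgPrime
  have h : ((n ^ 2 : ℕ) : ℝ) ≤ ((∑ i ∈ Finset.Icc 1 n, nthPrime i : ℕ) : ℝ) :=
    Nat.cast_le.mpr (aux_sum n)
  push_cast at h
  have hp : (0 : ℝ) < n := by exact_mod_cast hn
  rw [one_div_mul_eq_div, le_div_iff₀ hp]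
  nlinarith

lemma aux_large (n : ℕ) (hn : 225 ≤ n) :
    (Nat.nth Nat.Prime n : ℝ) ≤ n + (n + 1) * √(n : ℝ) := by
  set s := √(n : ℝ) with hs
  have hs2 : s ^ 2 = n := Real.sq_sqrt (Nat.cast_nonneg n)
  have hs15 : 15 ≤ s := by
    apply Real.le_sqrt_of_sq_le
    have : (225 : ℝ) ≤ n := by exact_mod_cast hn
    linarith
  set x : ℝ := n + (n + 1) * s with hx
  have hx' : x = s ^ 3 + s ^ 2 + s := by rw [hx, ← hs2]; ring
  have hx1 : 1 < x := by rw [hx']; nlinarith [sq_nonneg s, pow_pos (by linarith : 0 < s) 3]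
  have hpi := Chebyshev.pi_ge' hx1
  have hL := Real.log_two_gt_d9
  have hlog : Real.log (s + 1) ≤ 4 * Real.log 2 + (s - 15) / 16 := by
    have h1 : Real.log (s + 1) = Real.log 16 + Real.log ((s + 1) / 16) := by
      rw [← Real.log_mul (by norm_num) (by positivity)]; congr 1; ring
    have h2 : Real.log 16 = 4 * Real.log 2 := by
      rw [show (16 : ℝ) = 2 ^ 4 by norm_num, Real.log_pow]; norm_num
    have h3 := Real.log_le_sub_one_of_pos (show 0 < (s + 1) / 16 by positivity)
    rw [h1, h2]; linarith
  have h3 : Real.log ((s + 1) ^ 3) = 3 * Real.log (s + 1) := by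
    rw [Real.log_pow]; norm_num
  have ha : Real.log x ≤ 3 * Real.log (s + 1) := by
    rw [← h3]; apply Real.log_le_log (by linarith); rw [hx']; nlinarith
  have hb : Real.log (x + 2) ≤ 3 * Real.log (s + 1) := by
    rw [← h3]; apply Real.log_le_log (by linarith); rw [hx']; nlinarith
  have hxpos : 0 < Real.log x := Real.log_pos hx1
  have key : (n : ℝ) * Real.log x < (x - 1) * Real.log 2 - Real.log (x + 2) := by
    rw [← hs2]
    have h4 : s ^ 2 * Real.log x ≤ s ^ 2 * (3 * (4 * Real.log 2 + (s - 15) / 16)) := by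
      apply mul_le_mul_of_nonneg_left _ (sq_nonneg s); linarith
    have h5 : 0 < (x - 1 - 12 * (s ^ 2 + 1)) := by rw [hx']; nlinarith
    have h6 := mul_lt_mul_of_pos_left hL h5
    have h7 : (s ^ 2 + 1) * (3 * ((s - 15) / 16)) < (x - 1 - 12 * (s ^ 2 + 1)) * 0.6931471803 := by
      rw [hx']; nlinarith [mul_nonneg (sq_nonneg s) (by linarith : 0 ≤ s - 15)]
    linarith
  have hlt : (n : ℝ) < Nat.primeCounting ⌊x⌋₊ :=
    lt_of_lt_of_le ((lt_div_iff₀ hxpos).mpr key) hpi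
  have hlt' : n < Nat.count Nat.Prime (⌊x⌋₊ + 1) := by
    have : n < Nat.primeCounting ⌊x⌋₊ := by exact_mod_cast hlt
    exact this
  calc (Nat.nth Nat.Prime n : ℝ) ≤ (⌊x⌋₊ : ℝ) := by exact_mod_cast aux_nth_le hlt'
    _ ≤ x := Nat.floor_le (by linarith)

/-- Trial division test, valid below `38 ^ 2`. -/
def auxTest (k : ℕ) : Bool :=
  Nat.ble 2 k && (Nat.ble k 1443 && (List.range 36).all fun d => Nat.beq k (d + 2) || !(Nat.beq (k % (d + 2)) 0))

lemma auxTest_prime (k : ℕ) (h : auxTest k = true) : Nat.Prime k := by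
  simp only [auxTest, Bool.and_eq_true, Nat.ble_eq, List.all_eq_true, List.mem_range,
    Bool.or_eq_true, Nat.beq_eq, Bool.not_eq_true'] at h
  obtain ⟨h2, h3, h4⟩ := h
  by_contra hp
  have h5 := Nat.minFac_sq_le_self (by omega) hp
  have h6 : 2 ≤ k.minFac := (Nat.minFac_prime (by omega)).two_le
  have h7 : k.minFac < 38 := by
    by_contra hc
    have := Nat.pow_le_pow_left (Nat.le_of_not_lt hc) 2
    omega
  have h8 := h4 (k.minFac - 2) (by omega)
  rw [Nat.sub_add_cancel h6, Nat.mod_eq_zero_of_dvd (Nat.minFac_dvd k)] at h8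
  rcases h8 with h8 | h8
  · exact hp (by rw [h8]; exact Nat.minFac_prime (by omega))
  · simp at h8

lemma aux_step (a b B r : ℕ) (hB' : b ≤ Nat.count (fun k => auxTest k = true) (B + 1))
    (hr : r ^ 2 ≤ 10000 * a) (hBr : 100 * B ≤ 100 * a + (a + 1) * r) (n : ℕ) (h1 : a ≤ n) (h2 : n < b) :
    (Nat.nth Nat.Prime n : ℝ) ≤ n + (n + 1) * √(n : ℝ) := by
  have hB : b ≤ Nat.count Nat.Prime (B + 1) :=
    hB'.trans (Nat.count_mono_left fun k _ hk => auxTest_prime k hk)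
  have h : (Nat.nth Nat.Prime n : ℝ) ≤ B := by exact_mod_cast aux_nth_le (lt_of_lt_of_le h2 hB)
  have ha : (a : ℝ) ≤ n := by exact_mod_cast h1
  have ha0 : (0 : ℝ) ≤ a := Nat.cast_nonneg a
  have hr' : (r : ℝ) ^ 2 ≤ 10000 * a := by exact_mod_cast hr
  have hBr' : 100 * (B : ℝ) ≤ 100 * a + (a + 1) * r := by exact_mod_cast hBr
  have hs : (r : ℝ) / 100 ≤ √(n : ℝ) := by
    apply Real.le_sqrt_of_sq_le; nlinarith
  have : ((a : ℝ) + 1) * (r / 100) ≤ (n + 1) * √(n : ℝ) := by gcongr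
  linarith

lemma aux_main (n : ℕ) (hn : 1 ≤ n) :
    (Nat.nth Nat.Prime n : ℝ) ≤ n + (n + 1) * √(n : ℝ) := by
  rcases Nat.lt_or_ge n 225 with h | h
  swap
  · exact aux_large n h
  have key : (1 ≤ n ∧ n < 2) ∨ (2 ≤ n ∧ n < 3) ∨ (3 ≤ n ∧ n < 4) ∨ (4 ≤ n ∧ n < 6) ∨
    (6 ≤ n ∧ n < 9) ∨ (9 ≤ n ∧ n < 12) ∨ (12 ≤ n ∧ n < 16) ∨ (16 ≤ n ∧ n < 23) ∨
    (23 ≤ n ∧ n < 33) ∨ (33 ≤ n ∧ n < 48) ∨ (48 ≤ n ∧ n < 74) ∨ (74 ≤ n ∧ n < 125) ∨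
    (125 ≤ n ∧ n < 225) := by omega
  rcases key with h | h | h | h | h | h | h | h | h | h | h | h | h
  · exact aux_step 1 2 3 100 (by decide +kernel) (by norm_num) (by norm_num) n h.1 h.2
  · exact aux_step 2 3 5 141 (by decide +kernel) (by norm_num) (by norm_num) n h.1 h.2
  · exact aux_step 3 4 7 173 (by decide +kernel) (by norm_num) (by norm_num) n h.1 h.2
  · exact aux_step 4 6 13 200 (by decide +kernel) (by norm_num) (by norm_num) n h.1 h.2
  · exact aux_step 6 9 23 244 (by decide +kernel) (by norm_num) (by norm_num) n h.1 h.2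
  · exact aux_step 9 12 37 300 (by decide +kernel) (by norm_num) (by norm_num) n h.1 h.2
  · exact aux_step 12 16 53 346 (by decide +kernel) (by norm_num) (by norm_num) n h.1 h.2
  · exact aux_step 16 23 83 400 (by decide +kernel) (by norm_num) (by norm_num) n h.1 h.2
  · exact aux_step 23 33 137 479 (by decide +kernel) (by norm_num) (by norm_num) n h.1 h.2
  · exact aux_step 33 48 223 574 (by decide +kernel) (by norm_num) (by norm_num) n h.1 h.2
  · exact aux_step 48 74 373 692 (by decide +kernel) (by norm_num) (by norm_num) n h.1 h.2
  · exact aux_step 74 125 691 860 (by decide +kernel) (by norm_num) (by norm_num) n h.1 h.2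
  · exact aux_step 125 225 1427 1118 (by decide +kernel) (by norm_num) (by norm_num) n h.1 h.2

lemma aux_gap (n : ℕ) (hn : 1 ≤ n) : avgPrime (n + 1) ≤ avgPrime n + √(avgPrime n) := by
  have hA := aux_avg n hn
  have hm := aux_main n hn
  have hsq : √(n : ℝ) ≤ √(avgPrime n) := Real.sqrt_le_sqrt hA
  have hp : (0 : ℝ) < n := by exact_mod_cast hn
  have hS : ∑ i ∈ Finset.Icc 1 n, (nthPrime i : ℝ) = n * avgPrime n := by
    unfold avgPrime; field_simp
  have h1 : avgPrime (n + 1) = (n * avgPrime n + Nat.nth Nat.Prime n) / (n + 1) := by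
    rw [← hS]
    unfold avgPrime
    rw [Finset.sum_Icc_succ_top (by omega), one_div_mul_eq_div]
    simp [nthPrime]
  rw [h1, div_le_iff₀ (by linarith)]
  nlinarith

lemma aux_fin (x : ℝ) : {i : ℕ | 1 ≤ i ∧ avgPrime i ≤ x}.Finite := by
  apply (Set.finite_Iic ⌊x⌋₊).subset
  rintro i ⟨h1, h2⟩
  exact Nat.le_floor ((aux_avg i h1).trans h2)

lemma aux_count (x y : ℝ) (hx : 2 ≤ x) (hxy : x + √x ≤ y) :
    avgPrimeCount x < avgPrimeCount y := by
  have hne : {i : ℕ | 1 ≤ i ∧ avgPrime i ≤ x}.Nonempty := by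
    refine ⟨1, le_rfl, ?_⟩
    simpa [avgPrime, nthPrime, Nat.nth_prime_zero_eq_two] using hx
  obtain ⟨n, ⟨hn1, hn2⟩, hmax⟩ := (aux_fin x).exists_maximal hne
  have hs : √(avgPrime n) ≤ √x := Real.sqrt_le_sqrt hn2
  have hg := aux_gap n hn1
  have hs0 := Real.sqrt_nonneg x
  apply Set.ncard_lt_ncard _ (aux_fin y)
  rw [Set.ssubset_iff_exists]
  refine ⟨fun i hi => ⟨hi.1, by linarith [hi.2]⟩, n + 1, ⟨by omega, by linarith⟩, fun h => ?_⟩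
  have := hmax h (by omega)
  omega

theorem stmt13 (m : ℕ) (hm : 2 ≤ m) :
    avgPrimeCount (((m : ℝ) + 1 / 2) ^ 2) > avgPrimeCount ((m : ℝ) ^ 2) ∧
    avgPrimeCount ((m : ℝ) ^ 2) > avgPrimeCount (((m : ℝ) - 1 / 2) ^ 2) := by
  have h : (2 : ℝ) ≤ m := by exact_mod_cast hm
  constructor
  · apply aux_count _ _ (by nlinarith)
    rw [Real.sqrt_sq (by linarith)]; nlinarith
  · apply aux_count _ _ (by nlinarith)
    rw [Real.sqrt_sq (by linarith)]; nlinarith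
end

section
/- For every integer n ≥ 1, the number of averaged primes between the squares of consecutive averaged primes satisfies π̄(p̄_{n+1}²) − π̄(p̄_n²) > ln n. -/
open Finset Real

namespace AvgAux

lemma P_succ (i : ℕ) : nthPrime (i + 1) = Nat.nth Nat.Prime i := by simp [nthPrime]

lemma P_one : nthPrime 1 = 2 := by rw [P_succ]; exact Nat.nth_prime_zero_eq_two
lemma P_two : nthPrime 2 = 3 := by rw [P_succ]; exact Nat.nth_prime_one_eq_three

lemma P_prime (i : ℕ) : (nthPrime i).Prime := Nat.prime_nth_prime _

lemma P_lt (i : ℕ) : nthPrime (i + 1) < nthPrime (i + 2) := by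
  rw [P_succ, P_succ]
  exact Nat.nth_strictMono Nat.infinite_setOfPred_prime (Nat.lt_succ_self i)

lemma P_two_le (i : ℕ) : 2 ≤ nthPrime i := (P_prime i).two_le

lemma P_gap (i : ℕ) : nthPrime (i + 2) + 2 ≤ nthPrime (i + 3) := by
  have h1 := P_lt (i + 1)
  have h2 : 2 < nthPrime (i + 2) := lt_of_le_of_lt (P_two_le _) (P_lt i)
  have h3 : 2 < nthPrime (i + 3) := h2.trans h1
  have o1 := (P_prime (i + 2)).eq_two_or_odd
  have o2 := (P_prime (i + 3)).eq_two_or_odd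
  have h1' : nthPrime (i + 2) < nthPrime (i + 3) := h1
  omega

lemma P_ge (i : ℕ) : 2 * i + 1 ≤ nthPrime (i + 1) := by
  induction i with
  | zero => simp [P_one]
  | succ i ih =>
    cases i with
    | zero => simp [P_two]
    | succ j =>
      have := P_gap j
      have e : j + 1 + 1 + 1 = j + 3 := rfl
      have e' : j + 1 + 1 = j + 2 := rfl
      rw [e]; rw [e'] at ih; omega

/-- the sums -/
noncomputable def S (n : ℕ) : ℕ := ∑ i ∈ Finset.Icc 1 n, nthPrime i

lemma S_zero : S 0 = 0 := by simp [S]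
lemma S_succ (n : ℕ) : S (n + 1) = S n + nthPrime (n + 1) := by
  unfold S; rw [Finset.sum_Icc_succ_top (by omega)]

lemma A_eq (n : ℕ) : avgPrime n = (S n : ℝ) / n := by
  unfold avgPrime S; push_cast; ring

lemma S_ge (n : ℕ) : n * n ≤ S n := by
  induction n with
  | zero => simp
  | succ n ih => rw [S_succ]; have := P_ge n; nlinarith

lemma S_le (n : ℕ) : S (n + 1) ≤ (n + 1) * nthPrime (n + 1) := by
  induction n with
  | zero => simp [S_succ, S_zero]
  | succ n ih => 
    rw [S_succ]; have := P_lt n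
    have e : n + 1 + 1 = n + 2 := rfl
    rw [e]; nlinarith

lemma S_diff (n : ℕ) : S (n + 1) + (n + 1) * (n + 2) ≤ (n + 1) * nthPrime (n + 2) + 1 := by
  induction n with
  | zero => simp [S_succ, S_zero, P_one, P_two]
  | succ n ih =>
    rw [S_succ]; have := P_gap n
    have e : n + 1 + 1 = n + 2 := rfl
    have e' : n + 1 + 2 = n + 3 := rfl
    rw [e, e']; nlinarith

lemma A_zero : avgPrime 0 = 0 := by simp [avgPrime]

lemma A_ge (n : ℕ) : (n : ℝ) ≤ avgPrime n := by
  rcases Nat.eq_zero_or_pos n with rfl | h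
  · simp [A_zero]
  · rw [A_eq, le_div_iff₀ (by exact_mod_cast h)]
    exact_mod_cast S_ge n

lemma A_le (n : ℕ) : avgPrime (n + 1) ≤ nthPrime (n + 1) := by
  rw [A_eq, div_le_iff₀ (by positivity)]
  have := S_le n
  have h : (S (n + 1) : ℝ) ≤ ((n + 1) * nthPrime (n + 1) : ℕ) := by exact_mod_cast this
  push_cast at h ⊢
  linarith

lemma A_le' (n : ℕ) (hn : 1 ≤ n) : avgPrime n ≤ nthPrime n := by
  obtain ⟨m, rfl⟩ : ∃ m, n = m + 1 := ⟨n - 1, by omega⟩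
  exact A_le m

lemma A_succ (n : ℕ) : (n + 1 : ℝ) * avgPrime (n + 1) = n * avgPrime n + nthPrime (n + 1) := by
  rcases Nat.eq_zero_or_pos n with rfl | h
  · rw [A_eq, A_eq, S_succ, S_zero]; simp
  · have h' : (0 : ℝ) < n := by exact_mod_cast h
    rw [A_eq, A_eq, S_succ]; push_cast; field_simp

lemma A_lt (n : ℕ) : avgPrime n < avgPrime (n + 1) := by
  rcases Nat.eq_zero_or_pos n with rfl | h
  · have := A_ge 1
    rw [A_zero]; push_cast at this; simpa using lt_of_lt_of_le one_pos this
  · obtain ⟨m, rfl⟩ : ∃ m, n = m + 1 := ⟨n - 1, by omega⟩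
    have h1 := A_succ (m + 1)
    have h2 := A_le m
    have h3 : (nthPrime (m + 1) : ℝ) < nthPrime (m + 1 + 1) := by exact_mod_cast P_lt m
    push_cast at h1
    have h4 : (0 : ℝ) ≤ m := by positivity
    nlinarith

lemma A_mono : StrictMono avgPrime := strictMono_nat_of_lt_succ A_lt

lemma fin_set (x : ℝ) : {i : ℕ | 1 ≤ i ∧ avgPrime i ≤ x}.Finite := by
  apply (Set.finite_Iic ⌈x⌉₊).subset
  rintro i ⟨_, hi⟩
  have h := (A_ge i).trans (hi.trans (Nat.le_ceil x))
  exact_mod_cast h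

lemma count_le (x : ℝ) (M : ℕ) (h : x < avgPrime (M + 1)) : avgPrimeCount x ≤ M := by
  unfold avgPrimeCount
  rw [Nat.card_coe_set_eq]
  have : {i : ℕ | 1 ≤ i ∧ avgPrime i ≤ x} ⊆ (Finset.Icc 1 M : Finset ℕ) := by
    rintro i ⟨h1, hi⟩
    have := A_mono.lt_iff_lt.1 (lt_of_le_of_lt hi h)
    simp; omega
  have h2 := Set.ncard_le_ncard this (Finset.finite_toSet _)
  rw [Set.ncard_coe_finset] at h2
  simpa using h2

lemma le_count (x : ℝ) (M : ℕ) (h : avgPrime M ≤ x) : M ≤ avgPrimeCount x := by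
  unfold avgPrimeCount
  rw [Nat.card_coe_set_eq]
  have : ((Finset.Icc 1 M : Finset ℕ) : Set ℕ) ⊆ {i : ℕ | 1 ≤ i ∧ avgPrime i ≤ x} := by
    intro i hi
    simp at hi
    exact ⟨hi.1, (A_mono.monotone hi.2).trans h⟩
  have h2 := Set.ncard_le_ncard this (fin_set x)
  rw [Set.ncard_coe_finset] at h2
  simpa using h2

lemma wit (n k M : ℕ) (hk : Real.log n < k) (h1 : avgPrime n ^ 2 < avgPrime (M + 1))
    (h2 : avgPrime (M + k) ≤ avgPrime (n + 1) ^ 2) :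
    (avgPrimeCount (avgPrime (n + 1) ^ 2) : ℝ) - (avgPrimeCount (avgPrime n ^ 2) : ℝ) >
      Real.log n := by
  have a := count_le _ _ h1
  have b := le_count _ _ h2
  have a' : (avgPrimeCount (avgPrime n ^ 2) : ℝ) ≤ M := by exact_mod_cast a
  have b' : (M + k : ℝ) ≤ avgPrimeCount (avgPrime (n + 1) ^ 2) := by exact_mod_cast b
  linarith

lemma log_aux (e : ℕ) : Real.log ((2 ^ e : ℕ) + 1) ≤ (e + 1) * Real.log 2 := by
  have : ((e + 1 : ℕ) : ℝ) * Real.log 2 = Real.log (2 ^ (e + 1)) := by rw [Real.log_pow]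
  push_cast at this
  rw [this]
  apply Real.log_le_log (by positivity)
  have : (1 : ℝ) ≤ 2 ^ e := one_le_pow₀ (by norm_num)
  push_cast; rw [pow_succ]; linarith

lemma cheb1 (e i : ℕ) (he : 1 ≤ e) (hi : 1 ≤ i) (h : e * (i + 1) + 1 ≤ 2 ^ e) : nthPrime i ≤ 2 ^ e := by
  have h1 := Chebyshev.psi_ge (2 ^ e)
  have h2 := Chebyshev.psi_le_primeCounting_mul_log (2 ^ e)
  have h3 := log_aux e
  have h4 : Real.log ((2 ^ e : ℕ) : ℝ) = e * Real.log 2 := by push_cast; rw [Real.log_pow]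
  rw [h4] at h2
  have l2 : 0 < Real.log 2 := Real.log_pos (by norm_num)
  have h5 : (((2 ^ e : ℕ) : ℝ) - (e + 1)) * Real.log 2 ≤ (Nat.primeCounting (2 ^ e) * e) * Real.log 2 := by
    nlinarith
  have h6 := le_of_mul_le_mul_right h5 l2
  have h7 : (2 ^ e : ℕ) ≤ Nat.primeCounting (2 ^ e) * e + (e + 1) := by
    have : ((2 ^ e : ℕ) : ℝ) ≤ (Nat.primeCounting (2 ^ e) * e + (e + 1) : ℕ) := by
      push_cast at h6 ⊢; linarith
    exact_mod_cast this
  have h8 : i ≤ Nat.primeCounting (2 ^ e) := by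
    have : e * i ≤ e * Nat.primeCounting (2 ^ e) := by nlinarith
    exact Nat.le_of_mul_le_mul_left this he
  have : Nat.nth Nat.Prime (i - 1) < 2 ^ e + 1 := by
    apply Nat.nth_lt_of_lt_count
    have : Nat.primeCounting (2 ^ e) = Nat.count Nat.Prime (2 ^ e + 1) := rfl
    omega
  unfold nthPrime
  omega

lemma pi_P (i : ℕ) (hi : 1 ≤ i) : Nat.primeCounting (nthPrime i) = i := by
  obtain ⟨m, rfl⟩ : ∃ m, i = m + 1 := ⟨i - 1, by omega⟩
  have : Nat.primeCounting (nthPrime (m + 1)) = Nat.count Nat.Prime (nthPrime (m + 1) + 1) := rfl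
  rw [this, Nat.count_succ, if_pos (P_prime _), P_succ]
  rw [Nat.count_nth_of_infinite Nat.infinite_setOfPred_prime]

lemma cheb2 (e i : ℕ) (hi : 1 ≤ i) (h : nthPrime i ≤ 2 ^ e) : nthPrime i ≤ e * (i + 1) + 1 := by
  have h1 := Chebyshev.psi_ge (nthPrime i)
  have h2 := Chebyshev.psi_le_primeCounting_mul_log (nthPrime i)
  rw [pi_P i hi] at h2
  have hp : (0 : ℝ) < nthPrime i := by exact_mod_cast (P_prime i).pos
  have hle : (nthPrime i : ℝ) ≤ (2 ^ e : ℕ) := by exact_mod_cast h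
  have h3 : Real.log (nthPrime i + 1) ≤ (e + 1) * Real.log 2 :=
    (Real.log_le_log (by positivity) (by linarith)).trans (log_aux e)
  have h4 : Real.log (nthPrime i) ≤ e * Real.log 2 := by
    refine (Real.log_le_log hp hle).trans (le_of_eq ?_)
    push_cast; rw [Real.log_pow]
  have l2 : 0 < Real.log 2 := Real.log_pos (by norm_num)
  have h4' : (i : ℝ) * Real.log (nthPrime i) ≤ i * (e * Real.log 2) := by gcongr
  have h5 : (nthPrime i : ℝ) * Real.log 2 ≤ (e * (i + 1) + 1) * Real.log 2 := by
    nlinarith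
  have h6 := le_of_mul_le_mul_right h5 l2
  exact_mod_cast h6

lemma core (n k e B : ℕ) (he1 : 1 ≤ e) (hk : Real.log n < k) (hB : avgPrime n ^ 2 ≤ B)
    (he : e * (B + k + 1) + 1 ≤ 2 ^ e) (hpe : avgPrime (e + 1) ≤ avgPrime n ^ 2)
    (hG : (k * e : ℝ) ≤ avgPrime (n + 1) ^ 2 - avgPrime n ^ 2) :
    (avgPrimeCount (avgPrime (n + 1) ^ 2) : ℝ) - (avgPrimeCount (avgPrime n ^ 2) : ℝ) >
      Real.log n := by
  have hex : ∃ M : ℕ, avgPrime n ^ 2 < avgPrime (M + 1) := by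
    refine ⟨B, ?_⟩
    have := A_ge (B + 1)
    push_cast at this
    linarith
  classical
  obtain ⟨M, hM, hmin⟩ : ∃ M : ℕ, avgPrime n ^ 2 < avgPrime (M + 1) ∧
      ∀ m < M, ¬ (avgPrime n ^ 2 < avgPrime (m + 1)) :=
    ⟨Nat.find hex, Nat.find_spec hex, fun m hm => Nat.find_min hex hm⟩
  have hMe : e + 1 ≤ M := by
    have := A_mono.lt_iff_lt.1 (lt_of_le_of_lt hpe hM)
    omega
  have hAM : avgPrime M ≤ avgPrime n ^ 2 := by
    have := hmin (M - 1) (by omega)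
    rw [Nat.sub_add_cancel (by omega)] at this
    exact not_lt.1 this
  have hMB : M ≤ B := by
    have := (A_ge M).trans (hAM.trans hB)
    exact_mod_cast this
  apply wit n k M hk hM
  have key : ∀ j ≤ k, avgPrime (M + j) ≤ avgPrime n ^ 2 + j * e := by
    intro j
    induction j with
    | zero => intro _; simpa using hAM
    | succ j ih =>
      intro hj
      have ih := ih (by omega)
      have h1 := A_succ (M + j)
      have h2 := A_ge (M + j)
      have hc : e * (M + j + 1 + 1) + 1 ≤ 2 ^ e := by
        refine le_trans ?_ he
        have : M + j + 1 + 1 ≤ B + k + 1 := by omega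
        gcongr
      have h3 := cheb2 e (M + j + 1) (by omega) (cheb1 e (M + j + 1) he1 (by omega) hc)
      have h3' : (nthPrime (M + j + 1) : ℝ) ≤ e * (M + j + 1 + 1) + 1 := by exact_mod_cast h3
      have h4 : (e + 1 : ℝ) ≤ M := by exact_mod_cast hMe
      push_cast at h1 h2 ⊢
      have hpos : (0 : ℝ) < M + j + 1 := by positivity
      have hj0 : (0 : ℝ) ≤ j := by positivity
      have : (M + j + 1 : ℝ) * avgPrime (M + j + 1) ≤ (M + j + 1) * (avgPrime (M + j) + e) := by
        nlinarith
      have := le_of_mul_le_mul_left this hpos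
      have e1 : M + (j + 1) = M + j + 1 := by omega
      rw [e1]
      linarith
  have := key k le_rfl
  linarith

lemma sq_diff (n : ℕ) (hn : 2 ≤ n) : (2 * n : ℝ) ≤ avgPrime (n + 1) ^ 2 - avgPrime n ^ 2 := by
  obtain ⟨m, rfl⟩ : ∃ m, n = m + 1 := ⟨n - 1, by omega⟩
  have h1 := A_ge (m + 1)
  have h2 := A_ge (m + 2)
  have h3 := A_succ (m + 1)
  have h4 := S_diff m
  have h5 : (m + 1 : ℝ) * avgPrime (m + 1) = S (m + 1) := by
    rw [A_eq]; push_cast; field_simp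
  have h6 : (S (m + 1) : ℝ) + (m + 1) * (m + 2) ≤ (m + 1) * nthPrime (m + 2) + 1 := by
    exact_mod_cast h4
  have e : m + 1 + 1 = m + 2 := rfl
  rw [e] at h3 ⊢
  push_cast at h1 h2 h3 ⊢
  have hm : (1 : ℝ) ≤ m := by exact_mod_cast (by omega : 1 ≤ m)
  set a := avgPrime (m + 1)
  set b := avgPrime (m + 2)
  set p : ℝ := ((nthPrime (m + 2) : ℕ) : ℝ)
  -- (m+1)(m+2)(b-a) = (m+1)(p - a)
  have h7 : (m + 1 : ℝ) * (m + 2) * (b - a) ≥ (m + 1) * (m + 2) - 1 := by nlinarith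
  have hq : (0 : ℝ) < (m + 1) * (m + 2) := by positivity
  have hba : 0 ≤ b - a := by nlinarith
  have h8 : (2 * m + 3 : ℝ) * (b - a) ≤ b ^ 2 - a ^ 2 := by nlinarith
  have h9 : ((m + 1 : ℝ) * (m + 2)) * (2 * (m + 1)) ≤ (m + 1) * (m + 2) * (b ^ 2 - a ^ 2) := by
    have : (2 * m + 3 : ℝ) * ((m + 1) * (m + 2) - 1) ≤ (2 * m + 3) * ((m + 1) * (m + 2) * (b - a)) := by
      apply mul_le_mul_of_nonneg_left h7 (by positivity)
    have h10 := mul_le_mul_of_nonneg_left h8 hq.le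
    nlinarith
  exact le_of_mul_le_mul_left h9 hq

/-- version with only a bound on the nth prime -/
lemma core2 (n k e r a : ℕ) (hn : 2 ≤ n) (he1 : 1 ≤ e) (hr1 : 1 ≤ r) (ha1 : 1 ≤ a) (hk : Real.log n < k)
    (hr : r * (n + 1) + 1 ≤ 2 ^ r)
    (he : e * (2 ^ (2 * r) + k + 1) + 1 ≤ 2 ^ e)
    (ha : a * (e + 2) + 1 ≤ 2 ^ a) (han : 2 ^ a ≤ n ^ 2)
    (hG : k * e ≤ 2 * n) :
    (avgPrimeCount (avgPrime (n + 1) ^ 2) : ℝ) - (avgPrimeCount (avgPrime n ^ 2) : ℝ) >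
      Real.log n := by
  have hA0 : (0 : ℝ) ≤ avgPrime n := le_trans (by positivity) (A_ge n)
  apply core n k e (2 ^ (2 * r)) he1 hk _ he
  · have h1 := (A_le' (e + 1) (by omega)).trans
      (by exact_mod_cast cheb1 a (e + 1) ha1 (by omega) ha : (nthPrime (e + 1) : ℝ) ≤ (2 ^ a : ℕ))
    have h2 : ((2 ^ a : ℕ) : ℝ) ≤ (n ^ 2 : ℕ) := by exact_mod_cast han
    have h3 : ((n ^ 2 : ℕ) : ℝ) ≤ avgPrime n ^ 2 := by
      push_cast
      have := A_ge n
      gcongr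
    linarith
  · refine le_trans ?_ (sq_diff n hn)
    exact_mod_cast hG
  · have h1 := (A_le' n (by omega)).trans
      (by exact_mod_cast cheb1 r n hr1 (by omega) hr : (nthPrime n : ℝ) ≤ (2 ^ r : ℕ))
    have : avgPrime n ^ 2 ≤ ((2 ^ r : ℕ) : ℝ) ^ 2 := by gcongr
    refine this.trans (le_of_eq ?_)
    push_cast; ring

lemma log_lt_aux (n t : ℕ) (h0 : 1 ≤ n) (h : n < 2 ^ t) : Real.log n < t * 0.6931471808 := by
  have hn : (0 : ℝ) < n := by exact_mod_cast h0
  have : Real.log n < Real.log (2 ^ t) := Real.log_lt_log hn (by exact_mod_cast h)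
  rw [Real.log_pow] at this
  have := Real.log_two_lt_d9
  have : (t : ℝ) * Real.log 2 ≤ t * 0.6931471808 := by gcongr
  linarith

lemma pw1 (t : ℕ) (h : 8 ≤ t) : (t + 1) * (5 * t + 10) ≤ 2 ^ (t + 1) := by
  induction t, h using Nat.le_induction with
  | base => norm_num
  | succ t ht ih => rw [pow_succ]; nlinarith

lemma large (n : ℕ) (hn : 256 ≤ n) :
    (avgPrimeCount (avgPrime (n + 1) ^ 2) : ℝ) - (avgPrimeCount (avgPrime n ^ 2) : ℝ) >
      Real.log n := by
  obtain ⟨t, ht⟩ : ∃ t, t = Nat.log 2 n := ⟨_, rfl⟩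
  have h1 : 2 ^ t ≤ n := ht ▸ Nat.pow_log_le_self 2 (by omega)
  have h2 : n < 2 ^ (t + 1) := ht ▸ Nat.lt_pow_succ_log_self (by norm_num) n
  have h8 : 8 ≤ t := by
    by_contra hc
    have : 2 ^ (t + 1) ≤ 2 ^ 8 := Nat.pow_le_pow_right (by norm_num) (by omega)
    omega
  have hp := pw1 t h8
  apply core2 n (t + 1) (5 * t + 10) (2 * t + 2) (2 * t) (by omega) (by omega) (by omega) (by omega)
  · have := log_lt_aux n (t + 1) (by omega) h2
    push_cast at this ⊢
    have : (0 : ℝ) ≤ t := by positivity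
    linarith
  · have e : 2 ^ (2 * t + 2) = 2 ^ (t + 1) * 2 ^ (t + 1) := by rw [← pow_add]; congr 1; ring
    rw [e]; nlinarith
  · have e : 2 ^ (5 * t + 10) = 2 ^ (2 * (2 * t + 2)) * (32 * 2 ^ (t + 1)) := by
      rw [show (32 : ℕ) = 2 ^ 5 by norm_num, ← pow_add, ← pow_add]; congr 1; ring
    have e2 : 2 ^ (t + 1) ≤ 2 ^ (2 * (2 * t + 2)) := Nat.pow_le_pow_right (by norm_num) (by omega)
    rw [e]
    generalize 2 ^ (2 * (2 * t + 2)) = Q at *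
    generalize 2 ^ (t + 1) = R at *
    have : 5 * t + 10 ≤ R := by nlinarith
    have : t + 1 + 1 ≤ R := by nlinarith
    have h3 : (5 * t + 10) * (Q + (t + 1) + 1) ≤ R * (Q + Q) := by
      apply Nat.mul_le_mul <;> omega
    have : 1 ≤ Q * R := by nlinarith
    nlinarith
  · have e : 4 * 2 ^ (2 * t) = 2 ^ (t + 1) * 2 ^ (t + 1) := by
      rw [show (4 : ℕ) = 2 ^ 2 by norm_num, ← pow_add, ← pow_add]; congr 1; ring
    generalize 2 ^ (2 * t) = Q at *
    generalize 2 ^ (t + 1) = R at *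
    nlinarith
  · calc 2 ^ (2 * t) = (2 ^ t) ^ 2 := by rw [← pow_mul]; congr 1; ring
      _ ≤ n ^ 2 := by gcongr
  · have : 2 ^ (t + 1) ≤ 2 * n := by rw [pow_succ]; omega
    omega

lemma mid1 (n : ℕ) (h1 : 128 ≤ n) (h2 : n < 256) :
    (avgPrimeCount (avgPrime (n + 1) ^ 2) : ℝ) - (avgPrimeCount (avgPrime n ^ 2) : ℝ) >
      Real.log n := by
  apply core2 n 6 29 12 9 (by omega) (by omega) (by omega) (by omega)
  · have := log_lt_aux n 8 (by omega) h2
    norm_num at this ⊢; linarith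
  · omega
  · norm_num
  · norm_num
  · nlinarith
  · omega

lemma mid2 (n : ℕ) (h1 : 68 ≤ n) (h2 : n < 128) :
    (avgPrimeCount (avgPrime (n + 1) ^ 2) : ℝ) - (avgPrimeCount (avgPrime n ^ 2) : ℝ) >
      Real.log n := by
  apply core2 n 5 27 11 9 (by omega) (by omega) (by omega) (by omega)
  · have := log_lt_aux n 7 (by omega) h2
    norm_num at this ⊢; linarith
  · omega
  · norm_num
  · norm_num
  · nlinarith
  · omega

/-- table of primes -/
def L : List ℕ := [2, 3, 5, 7, 11, 13, 17, 19, 23, 29, 31, 37, 41, 43, 47, 53, 59, 61, 67, 71, 73,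
  79, 83, 89, 97, 101, 103, 107, 109, 113, 127, 131, 137, 139, 149, 151, 157, 163, 167, 173, 179,
  181, 191, 193, 197, 199, 211, 223, 227, 229, 233, 239, 241, 251, 257, 263, 269, 271, 277, 281,
  283, 293, 307, 311, 313, 317, 331, 337]

/-- table of sums -/
def T (n : ℕ) : ℕ := (L.take n).sum

lemma L_spec : ∀ i < 68, (L.getD i 0).Prime ∧ Nat.count Nat.Prime (L.getD i 0) = i := by
  decide +kernel

lemma P_eq (i : ℕ) (hi : i < 68) : nthPrime (i + 1) = L.getD i 0 := by
  obtain ⟨h1, h2⟩ := L_spec i hi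
  rw [P_succ]
  conv_lhs => rw [← h2]
  exact Nat.nth_count h1

lemma T_succ : ∀ i < 68, T (i + 1) = T i + L.getD i 0 := by decide +kernel

lemma S_eq (n : ℕ) (hn : n ≤ 68) : S n = T n := by
  induction n with
  | zero => rw [S_zero]; rfl
  | succ n ih => rw [S_succ, ih (by omega), P_eq n (by omega), T_succ n (by omega)]

lemma A_T (n : ℕ) (hn : n ≤ 68) : avgPrime n = (T n : ℝ) / n := by rw [A_eq, S_eq n hn]

lemma log_lt_aux2 (n k : ℕ) (h0 : 1 ≤ n) (h : n * 10 ^ k ≤ 27 ^ k) (hk : 1 ≤ k) :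
    Real.log n < k := by
  have hn : (0 : ℝ) < n := by exact_mod_cast h0
  rw [Real.log_lt_iff_lt_exp hn]
  have h1 : (n : ℝ) * 10 ^ k ≤ 27 ^ k := by exact_mod_cast h
  have h2 : (n : ℝ) ≤ 2.7 ^ k := by
    rw [show (2.7 : ℝ) = 27 / 10 by norm_num, div_pow, le_div_iff₀ (by positivity)]
    exact h1
  have h3 : Real.exp k = Real.exp 1 ^ k := by rw [← Real.exp_nat_mul]; simp
  rw [h3]
  refine lt_of_le_of_lt h2 ?_
  have := Real.exp_one_gt_d9
  exact pow_lt_pow_left₀ (by linarith) (by norm_num) (by omega)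

lemma chk : ∀ n < 68, 6 ≤ n → ∃ k < 6, ∃ e < 20, 1 ≤ k ∧ 1 ≤ e ∧ n * 10 ^ k ≤ 27 ^ k ∧
    e * (T n ^ 2 / n ^ 2 + 1 + k + 1) + 1 ≤ 2 ^ e ∧ T (e + 1) * n ^ 2 ≤ (e + 1) * T n ^ 2 ∧
    k * e * (n ^ 2 * (n + 1) ^ 2) + T n ^ 2 * (n + 1) ^ 2 ≤ T (n + 1) ^ 2 * n ^ 2 := by
  decide +kernel

lemma small (n : ℕ) (h1 : 6 ≤ n) (h2 : n < 68) :
    (avgPrimeCount (avgPrime (n + 1) ^ 2) : ℝ) - (avgPrimeCount (avgPrime n ^ 2) : ℝ) >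
      Real.log n := by
  obtain ⟨k, hk, e, he, hk1, he1, c1, c2, c3, c4⟩ := chk n h2 h1
  have hn : (0 : ℝ) < n := by exact_mod_cast (by omega : 0 < n)
  apply core n k e (T n ^ 2 / n ^ 2 + 1) he1 (log_lt_aux2 n k (by omega) c1 hk1) _ c2
  · rw [A_T _ (by omega), A_T _ (by omega), div_pow, div_le_div_iff₀ (by positivity) (by positivity)]
    rw [mul_comm ((T n : ℝ) ^ 2)]
    exact_mod_cast c3
  · rw [A_T _ (by omega), A_T _ (by omega), div_pow, div_pow,
      div_sub_div _ _ (by positivity) (by positivity), le_div_iff₀ (by positivity), le_sub_iff_add_le]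
    have c4' : (k * e * (n ^ 2 * (n + 1) ^ 2) + T n ^ 2 * (n + 1) ^ 2 : ℝ) ≤ T (n + 1) ^ 2 * n ^ 2 := by
      exact_mod_cast c4
    push_cast
    linarith
  · rw [A_T _ (by omega), div_pow, div_le_iff₀ (by positivity)]
    have := Nat.lt_div_mul_add (a := T n ^ 2) (b := n ^ 2) (by positivity)
    have : T n ^ 2 ≤ (T n ^ 2 / n ^ 2 + 1) * n ^ 2 := by rw [add_mul, one_mul]; exact this.le
    exact_mod_cast this

lemma tiny (n k M : ℕ) (h0 : 1 ≤ n) (hn : n < 6) (hM : M + k ≤ 68) (hk1 : 1 ≤ k)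
    (c1 : n * 10 ^ k ≤ 27 ^ k) (c2 : T n ^ 2 * (M + 1) < T (M + 1) * n ^ 2)
    (c3 : T (M + k) * (n + 1) ^ 2 ≤ T (n + 1) ^ 2 * (M + k)) :
    (avgPrimeCount (avgPrime (n + 1) ^ 2) : ℝ) - (avgPrimeCount (avgPrime n ^ 2) : ℝ) >
      Real.log n := by
  have hn : (0 : ℝ) < n := by exact_mod_cast (by omega : 0 < n)
  have hMk : (0 : ℝ) < (M + k : ℕ) := by exact_mod_cast (by omega : 0 < M + k)
  apply wit n k M (log_lt_aux2 n k h0 c1 hk1)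
  · rw [A_T _ (by omega), A_T _ (by omega), div_pow, div_lt_div_iff₀ (by positivity) (by positivity)]
    exact_mod_cast c2
  · rw [A_T _ (by omega), A_T _ (by omega), div_pow, div_le_div_iff₀ (by positivity) (by positivity)]
    exact_mod_cast c3

end AvgAux

theorem stmt14 (n : ℕ) (hn : 1 ≤ n) :
    (avgPrimeCount (avgPrime (n + 1) ^ 2) : ℝ) - (avgPrimeCount (avgPrime n ^ 2) : ℝ) >
      Real.log n := by
  rcases lt_or_ge n 6 with h | h
  · interval_cases n
    · exact AvgAux.tiny 1 1 3 (by decide) (by decide) (by decide) (by decide) (by decide) (by decide) (by decide)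
    · exact AvgAux.tiny 2 1 5 (by decide) (by decide) (by decide) (by decide) (by decide) (by decide) (by decide)
    · exact AvgAux.tiny 3 2 9 (by decide) (by decide) (by decide) (by decide) (by decide) (by decide) (by decide)
    · exact AvgAux.tiny 4 2 13 (by decide) (by decide) (by decide) (by decide) (by decide) (by decide) (by decide)
    · exact AvgAux.tiny 5 2 19 (by decide) (by decide) (by decide) (by decide) (by decide) (by decide) (by decide)
  rcases lt_or_ge n 68 with h2 | h2
  · exact AvgAux.small n h h2
  rcases lt_or_ge n 128 with h3 | h3
  · exact AvgAux.mid2 n h2 h3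
  rcases lt_or_ge n 256 with h4 | h4
  · exact AvgAux.mid1 n h3 h4
  · exact AvgAux.large n h4
end

section
/- For every integer n ≥ 4, the averaged-prime analogue of the Brocard conjecture holds: π̄(p̄_{n+1}²) − π̄(p̄_n²) > 4. -/
open Finset Real

namespace AvgBrocard

noncomputable def P (k : ℕ) : ℕ := Nat.nth Nat.Prime k
noncomputable def S (n : ℕ) : ℕ := ∑ i ∈ Finset.range n, P i

lemma S_succ (n : ℕ) : S (n + 1) = S n + P n := Finset.sum_range_succ _ _

lemma avg_eq (n : ℕ) : avgPrime n = (S n : ℝ) / n := by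
  have h : ∑ i ∈ Finset.Icc 1 n, (nthPrime i : ℝ) = (S n : ℝ) := by
    induction n with
    | zero => simp [S]
    | succ k ih =>
      rw [Finset.sum_Icc_succ_top (by omega), ih, S_succ]
      push_cast
      simp [nthPrime, P]
  unfold avgPrime
  rw [h]; ring

lemma P_prime (k : ℕ) : (P k).Prime := Nat.prime_nth_prime k

lemma P_mono : StrictMono P := Nat.nth_strictMono Nat.infinite_setOfPred_prime

lemma P_zero : P 0 = 2 := Nat.nth_prime_zero_eq_two

lemma P_odd (k : ℕ) (hk : 1 ≤ k) : P k % 2 = 1 := by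
  rcases (P_prime k).eq_two_or_odd with h | h
  · have := P_mono (show 0 < k by omega)
    rw [P_zero] at this; omega
  · exact h

lemma P_gap (k : ℕ) (hk : 1 ≤ k) : P k + 2 ≤ P (k + 1) := by
  have h1 := P_odd k hk
  have h2 := P_odd (k + 1) (by omega)
  have h3 := P_mono (Nat.lt_succ_self k)
  simp only [Nat.succ_eq_add_one] at h3
  omega

lemma P_lower (k : ℕ) : 2 * k + 1 ≤ P k := by
  induction k with
  | zero => rw [P_zero]; norm_num
  | succ k ih =>
    rcases Nat.eq_zero_or_pos k with rfl | hk
    · have := P_mono (show 0 < 1 by omega)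
      rw [P_zero] at this; simp only [zero_add]; omega
    · have := P_gap k hk
      omega

lemma S_lower (n : ℕ) : n * n ≤ S n := by
  induction n with
  | zero => simp
  | succ n ih =>
    rw [S_succ]
    have := P_lower n
    nlinarith

lemma S_lt (n : ℕ) (hn : 1 ≤ n) : S n < n * P n := by
  induction n, hn using Nat.le_induction with
  | base =>
    have := P_mono (show 0 < 1 by omega)
    simpa [S] using this
  | succ n hn ih =>
    rw [S_succ]
    have := P_mono (Nat.lt_succ_self n)
    simp only [Nat.succ_eq_add_one] at this
    nlinarith

lemma avg_ge (n : ℕ) (hn : 1 ≤ n) : (n : ℝ) ≤ avgPrime n := by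
  rw [avg_eq, le_div_iff₀ (by positivity)]
  exact_mod_cast S_lower n

lemma avg_step (n : ℕ) (hn : 1 ≤ n) :
    avgPrime (n + 1) - avgPrime n = ((P n : ℝ) - avgPrime n) / ((n : ℝ) + 1) := by
  have : (n : ℝ) ≠ 0 := by positivity
  have : (n : ℝ) + 1 ≠ 0 := by positivity
  rw [avg_eq, avg_eq, S_succ]
  push_cast
  field_simp
  ring

lemma avg_lt_succ (n : ℕ) (hn : 1 ≤ n) : avgPrime n < avgPrime (n + 1) := by
  have h := avg_step n hn
  have h2 : avgPrime n < P n := by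
    rw [avg_eq, div_lt_iff₀ (by positivity), mul_comm]
    exact_mod_cast S_lt n hn
  have : 0 < ((P n : ℝ) - avgPrime n) / ((n : ℝ) + 1) := div_pos (by linarith) (by positivity)
  linarith

lemma avg_mono (m n : ℕ) (hm : 1 ≤ m) (h : m ≤ n) : avgPrime m ≤ avgPrime n := by
  induction n, h using Nat.le_induction with
  | base => exact le_rfl
  | succ n hn ih => exact ih.trans (avg_lt_succ n (by omega)).le

lemma finite_set (x : ℝ) : {i : ℕ | 1 ≤ i ∧ avgPrime i ≤ x}.Finite := by
  apply (Set.finite_Iic ⌊x⌋₊).subset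
  rintro i ⟨h1, h2⟩
  exact Nat.le_floor ((avg_ge i h1).trans h2)

lemma count_lemma (x y : ℝ) (M : ℕ) (hxy : x ≤ y) (h1 : x < avgPrime (M + 1))
    (h5 : avgPrime (M + 5) ≤ y) : (avgPrimeCount y : ℝ) - (avgPrimeCount x : ℝ) > 4 := by
  have hd : Disjoint {i : ℕ | 1 ≤ i ∧ avgPrime i ≤ x} (Set.Icc (M + 1) (M + 5)) := by
    rw [Set.disjoint_left]
    rintro i ⟨_, hi⟩ ⟨hi2, _⟩
    have := avg_mono (M + 1) i (by omega) hi2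
    linarith
  have hs : {i : ℕ | 1 ≤ i ∧ avgPrime i ≤ x} ∪ Set.Icc (M + 1) (M + 5) ⊆
      {i : ℕ | 1 ≤ i ∧ avgPrime i ≤ y} := by
    rintro i (⟨h, h'⟩ | ⟨h, h'⟩)
    · exact ⟨h, h'.trans hxy⟩
    · exact ⟨by omega, (avg_mono i (M + 5) (by omega) h').trans h5⟩
  have h := Set.ncard_le_ncard hs (finite_set y)
  rw [Set.ncard_union_eq hd (finite_set x) (Set.finite_Icc _ _)] at h
  have h6 : (Set.Icc (M + 1) (M + 5)).ncard = 5 := by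
    rw [← Finset.coe_Icc, Set.ncard_coe_finset, Nat.card_Icc]; omega
  rw [h6] at h
  have h7 : avgPrimeCount x + 5 ≤ avgPrimeCount y := h
  have h8 : (avgPrimeCount x : ℝ) + 5 ≤ avgPrimeCount y := by exact_mod_cast h7
  linarith

/-! Chebyshev type bound -/

lemma cheb (k : ℕ) (hk : 1 ≤ k) : 2 ^ (P k - 1) ≤ (P k - 1) ^ (k + 1) := by
  have hodd := P_odd k hk
  have hlow := P_lower k
  obtain ⟨m, hm⟩ : ∃ m, P k = 2 * m + 1 := ⟨P k / 2, by omega⟩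
  have hm0 : 0 < m := by omega
  have e : P k - 1 = 2 * m := by omega
  rw [e]
  have h1 := Nat.four_pow_le_two_mul_self_mul_centralBinom m hm0
  have h2 : Nat.centralBinom m ≤ (2 * m) ^ k := by
    have hp := Nat.prod_pow_factorization_centralBinom m
    rw [← hp]
    have : ∏ p ∈ Finset.range (2 * m + 1), p ^ (Nat.centralBinom m).factorization p
        = ∏ p ∈ (Finset.range (2 * m + 1)).filter Nat.Prime,
          p ^ (Nat.centralBinom m).factorization p := by
      symm
      apply Finset.prod_filter_of_ne
      intro p _ hne
      by_contra hnp
      exact hne (by rw [Nat.factorization_eq_zero_of_not_prime _ hnp, pow_zero])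
    rw [this]
    have hc : ((Finset.range (2 * m + 1)).filter Nat.Prime).card = k := by
      rw [← Nat.count_eq_card_filter_range, ← hm]
      exact Nat.count_nth_of_infinite Nat.infinite_setOfPred_prime k
    calc _ ≤ ∏ p ∈ (Finset.range (2 * m + 1)).filter Nat.Prime, 2 * m := by
          apply Finset.prod_le_prod'
          intro p _
          exact Nat.pow_factorization_choose_le (by omega)
      _ = (2 * m) ^ k := by rw [Finset.prod_const, hc]
  calc 2 ^ (2 * m) = 4 ^ m := by rw [pow_mul]; norm_num
    _ ≤ 2 * m * Nat.centralBinom m := h1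
    _ ≤ 2 * m * (2 * m) ^ k := Nat.mul_le_mul_left _ h2
    _ = (2 * m) ^ (k + 1) := by ring

lemma exp_bound (t : ℝ) (ht : 29 / 2 ≤ t) :
    Real.log (25 / 4) + 3 * Real.log t < t * Real.log 2 := by
  have h1 : Real.log t ≤ Real.log (29 / 2) + (t - 29 / 2) / (29 / 2) := by
    have := Real.log_le_sub_one_of_pos (show 0 < t / (29 / 2) by positivity)
    rw [Real.log_div (by positivity) (by norm_num)] at this
    have e : (t - 29 / 2) / (29 / 2) = t / (29 / 2) - 1 := by ring
    rw [e]; linarith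
  have h2 : 2 * (Real.log (25 / 4) + 3 * Real.log (29 / 2)) < 29 * Real.log 2 := by
    have : Real.log (((25 / 4) * (29 / 2) ^ 3) ^ 2) < Real.log (2 ^ 29) :=
      Real.log_lt_log (by positivity) (by norm_num)
    rw [Real.log_pow, Real.log_mul (by norm_num) (by norm_num), Real.log_pow, Real.log_pow] at this
    push_cast at this
    linarith
  have h3 := Real.log_two_gt_d9
  nlinarith

lemma ratio_bound (t : ℝ) (k : ℕ) (hk : 1 ≤ k) (ht : 29 / 2 ≤ t)
    (hkt : ((k : ℝ) + 1) ≤ 25 / 4 * t ^ 2) : ((P k : ℝ) - 1) / ((k : ℝ) + 1) ≤ t := by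
  by_contra! hcon
  have hk1 : (0 : ℝ) < (k : ℝ) + 1 := by positivity
  rw [lt_div_iff₀ hk1] at hcon
  have hc : (2 : ℝ) ^ (P k - 1) ≤ ((P k - 1 : ℕ) : ℝ) ^ (k + 1) := by exact_mod_cast cheb k hk
  have hl := P_lower k
  have hcast : ((P k - 1 : ℕ) : ℝ) = (P k : ℝ) - 1 := by
    rw [Nat.cast_sub (by omega)]; simp
  have hlog := Real.log_le_log (by positivity) hc
  rw [Real.log_pow, Real.log_pow, hcast] at hlog
  push_cast at hlog
  set q : ℝ := (P k : ℝ) - 1 with hq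
  have hy : (29 / 2 : ℝ) ≤ t * (k + 1) := by nlinarith
  have he := Real.exp_one_lt_d9
  have hanti := Real.log_div_self_antitoneOn (show t * ((k : ℝ) + 1) ∈ {x | Real.exp 1 ≤ x} by
      simp only [Set.mem_ofPred_eq]; linarith) (show q ∈ {x | Real.exp 1 ≤ x} by
      simp only [Set.mem_ofPred_eq]; linarith) hcon.le
  have hq0 : 0 < q := by linarith
  have hy0 : 0 < t * ((k : ℝ) + 1) := by linarith
  simp only at hanti
  rw [div_le_div_iff₀ hq0 hy0] at hanti
  have h1 : t * Real.log 2 ≤ Real.log (t * (k + 1)) := by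
    have h2 : (q * Real.log 2) * t ≤ q * Real.log (t * (k + 1)) := by
      calc (q * Real.log 2) * t ≤ (((k : ℝ) + 1) * Real.log q) * t :=
            mul_le_mul_of_nonneg_right hlog (by linarith)
        _ = Real.log q * (t * (k + 1)) := by ring
        _ ≤ _ := by linarith
    have h3 : q * (t * Real.log 2) ≤ q * Real.log (t * (k + 1)) := by linarith
    exact le_of_mul_le_mul_left h3 hq0
  have h4 : Real.log (t * (k + 1)) ≤ Real.log (25 / 4) + 3 * Real.log t := by
    have ht0 : 0 < t := by linarith
    have : Real.log (t * (k + 1)) ≤ Real.log (25 / 4 * t ^ 3) := by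
      apply Real.log_le_log hy0
      have := mul_le_mul_of_nonneg_left hkt ht0.le
      linarith [this, show t * (25 / 4 * t ^ 2) = 25 / 4 * t ^ 3 by ring]
    rw [Real.log_mul (x := 25 / 4) (by norm_num) (by positivity), Real.log_pow] at this
    push_cast at this
    exact this
  linarith [exp_bound t ht]

/-! Small values -/

def isP (m : ℕ) : Bool :=
  (2 ≤ m) && (List.range 53).all (fun d => d < 2 || m ≤ d || m % d != 0)

lemma isP_iff (m : ℕ) (hm : m < 2809) : isP m = decide m.Prime := by
  rw [Bool.eq_iff_iff, decide_eq_true_iff]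
  simp only [isP, Bool.and_eq_true, decide_eq_true_eq, List.all_eq_true, List.mem_range,
    Bool.or_eq_true, bne_iff_ne]
  constructor
  · rintro ⟨h2, h⟩
    by_contra hnp
    have hsq := Nat.minFac_sq_le_self (by omega) hnp
    have hlt : m.minFac < 53 := by nlinarith
    have hpr := Nat.minFac_prime (show m ≠ 1 by omega)
    have h3 := hpr.two_le
    rcases h _ hlt with (h4 | h4) | h4
    · omega
    · nlinarith
    · exact h4 (Nat.mod_eq_zero_of_dvd (Nat.minFac_dvd m))
  · intro hp
    refine ⟨hp.two_le, fun d _ => ?_⟩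
    by_contra! hc
    obtain ⟨⟨h1, h2⟩, h3⟩ := hc
    rcases (Nat.dvd_prime hp).1 (Nat.dvd_of_mod_eq_zero h3) with h | h <;> omega

def L : List ℕ := [
  2, 3, 5, 7, 11, 13, 17, 19, 23, 29, 31, 37, 41, 43, 47, 53,
  59, 61, 67, 71, 73, 79, 83, 89, 97, 101, 103, 107, 109, 113, 127, 131,
  137, 139, 149, 151, 157, 163, 167, 173, 179, 181, 191, 193, 197, 199, 211, 223,
  227, 229, 233, 239, 241, 251, 257, 263, 269, 271, 277, 281, 283, 293, 307, 311,
  313, 317, 331, 337, 347, 349, 353, 359, 367, 373, 379, 383, 389, 397, 401, 409,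
  419, 421, 431, 433, 439, 443, 449, 457, 461, 463, 467, 479, 487, 491, 499, 503,
  509, 521, 523, 541, 547, 557, 563, 569, 571, 577, 587, 593, 599, 601, 607, 613,
  617, 619, 631, 641, 643, 647, 653, 659, 661, 673, 677, 683, 691, 701, 709, 719,
  727, 733, 739, 743, 751, 757, 761, 769, 773, 787, 797, 809, 811, 821, 823, 827,
  829, 839, 853, 857, 859, 863, 877, 881, 883, 887, 907, 911, 919, 929, 937, 941,
  947, 953, 967, 971, 977, 983, 991, 997, 1009, 1013, 1019, 1021, 1031, 1033, 1039, 1049,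
  1051, 1061, 1063, 1069, 1087, 1091, 1093, 1097, 1103, 1109, 1117, 1123, 1129, 1151, 1153, 1163,
  1171, 1181, 1187, 1193, 1201, 1213, 1217, 1223, 1229, 1231, 1237, 1249, 1259, 1277, 1279, 1283,
  1289, 1291, 1297, 1301, 1303, 1307, 1319, 1321, 1327, 1361, 1367, 1373, 1381, 1399, 1409, 1423,
  1427, 1429, 1433, 1439, 1447, 1451, 1453, 1459, 1471, 1481, 1483, 1487, 1489, 1493, 1499, 1511,
  1523, 1531, 1543, 1549, 1553, 1559, 1567, 1571, 1579, 1583, 1597, 1601, 1607, 1609, 1613, 1619,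
  1621, 1627, 1637, 1657, 1663, 1667, 1669, 1693, 1697, 1699, 1709, 1721, 1723, 1733, 1741, 1747,
  1753, 1759, 1777, 1783, 1787, 1789, 1801, 1811, 1823, 1831, 1847, 1861, 1867, 1871, 1873, 1877,
  1879, 1889, 1901, 1907, 1913, 1931, 1933, 1949, 1951, 1973, 1979, 1987, 1993, 1997, 1999, 2003,
  2011, 2017, 2027, 2029, 2039, 2053, 2063, 2069, 2081, 2083, 2087, 2089, 2099, 2111, 2113, 2129,
  2131, 2137, 2141, 2143, 2153, 2161, 2179, 2203, 2207, 2213, 2221, 2237, 2239, 2243, 2251, 2267,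
  2269, 2273, 2281, 2287, 2293, 2297, 2309, 2311, 2333, 2339, 2341, 2347, 2351, 2357, 2371, 2377,
  2381, 2383, 2389, 2393, 2399, 2411, 2417, 2423, 2437, 2441, 2447, 2459, 2467, 2473, 2477, 2503,
  2521, 2531, 2539, 2543, 2549, 2551]

lemma filter_eq (m : ℕ) : (List.range m).filter (fun p => decide p.Prime)
    = (List.range (Nat.count Nat.Prime m)).map P := by
  induction m with
  | zero => simp
  | succ m ih =>
    rw [List.range_succ, List.filter_append, ih, Nat.count_succ]
    by_cases h : m.Prime
    · simp [h, List.range_succ, P, Nat.nth_count h]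
    · simp [h]

set_option maxRecDepth 100000 in
lemma L_filter : (List.range 2552).filter isP = L := by decide +kernel

lemma L_eq : L = (List.range L.length).map P := by
  have h : L = (List.range (Nat.count Nat.Prime 2552)).map P := by
    rw [← filter_eq, ← L_filter]
    apply List.filter_congr
    intro x hx
    rw [List.mem_range] at hx
    exact isP_iff x (by omega)
  have h2 := congrArg List.length h
  rw [List.length_map, List.length_range] at h2
  rw [h2]; exact h

lemma S_take (k : ℕ) (hk : k ≤ L.length) : S k = (L.take k).sum := by
  rw [L_eq, ← List.map_take, List.take_range, Nat.min_eq_left hk, S]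
  clear hk
  induction k with
  | zero => simp
  | succ k ih => rw [Finset.sum_range_succ, List.range_succ, ih]; simp

def T (k : ℕ) : ℕ := (L.take k).sum

def Ms : List ℕ := [12, 19, 26, 36, 46, 58, 73, 89, 109, 130, 152, 175, 202, 232, 263, 297, 332, 367]

def good (n M : ℕ) : Bool :=
  M + 5 ≤ L.length && T n * T n * (M + 1) < T (M + 1) * (n * n) &&
  T (M + 5) * ((n + 1) * (n + 1)) ≤ T (n + 1) * T (n + 1) * (M + 5)

set_option maxRecDepth 100000 in
lemma good_all : ∀ j < 18, good (j + 4) (Ms.getD j 0) = true := by decide +kernel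

set_option maxRecDepth 100000 in
lemma S22 : T 22 = 791 ∧ T 4 = 17 ∧ T 5 = 28 ∧ L.length = 374 := by decide +kernel

lemma avg_T (k : ℕ) (hk : k ≤ L.length) : avgPrime k = (T k : ℝ) / k := by
  rw [avg_eq, S_take k hk, T]

lemma small (n : ℕ) (h4 : 4 ≤ n) (h : n < 22) :
    (avgPrimeCount (avgPrime (n + 1) ^ 2) : ℝ) - (avgPrimeCount (avgPrime n ^ 2) : ℝ) > 4 := by
  have hg := good_all (n - 4) (by omega)
  rw [show n - 4 + 4 = n by omega] at hg
  set M := Ms.getD (n - 4) 0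
  simp only [good, Bool.and_eq_true, decide_eq_true_eq] at hg
  obtain ⟨⟨hM, h1⟩, h2⟩ := hg
  have hlen := S22.2.2.2
  have h1' : (T n : ℝ) * T n * (M + 1) < T (M + 1) * (n * n) := by exact_mod_cast h1
  have h2' : (T (M + 5) : ℝ) * ((n + 1) * (n + 1)) ≤ T (n + 1) * T (n + 1) * (M + 5) := by
    exact_mod_cast h2
  have hn0 : (0 : ℝ) < n := by positivity
  apply count_lemma _ _ M
  · have h3 := avg_lt_succ n (by omega)
    have h5 := avg_ge n (by omega)
    exact pow_le_pow_left₀ (by linarith) h3.le 2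
  · rw [avg_T n (by omega), avg_T (M + 1) (by omega), div_pow,
      div_lt_div_iff₀ (by positivity) (by positivity)]
    push_cast
    linarith
  · rw [avg_T (n + 1) (by omega), avg_T (M + 5) (by omega), div_pow,
      div_le_div_iff₀ (by positivity) (by positivity)]
    push_cast
    linarith

lemma D_lower (n : ℕ) (hn : 4 ≤ n) : S n + n * (n + 1) ≤ n * P n := by
  induction n, hn using Nat.le_induction with
  | base =>
    have hlen := S22.2.2.2
    have h4 : S 4 = 17 := by rw [S_take 4 (by omega)]; exact S22.2.1
    have h5 : S 5 = 28 := by rw [S_take 5 (by omega)]; exact S22.2.2.1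
    rw [S_succ] at h5
    omega
  | succ n hn ih =>
    rw [S_succ]
    have := P_gap n (by omega)
    nlinarith

lemma gap_lower (n : ℕ) (hn : 4 ≤ n) : avgPrime n + 1 ≤ avgPrime (n + 1) := by
  have h := avg_step n (by omega)
  have h2 : avgPrime n + (n + 1) ≤ P n := by
    have hn0 : (0 : ℝ) < n := by positivity
    have h3 : (S n : ℝ) + n * (n + 1) ≤ n * P n := by exact_mod_cast D_lower n hn
    have h4 : avgPrime n ≤ P n - (n + 1) := by
      rw [avg_eq, div_le_iff₀ hn0]
      linarith
    linarith
  have : 1 ≤ ((P n : ℝ) - avgPrime n) / ((n : ℝ) + 1) := by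
    rw [le_div_iff₀ (by positivity)]; linarith
  linarith

lemma large (n : ℕ) (hn : 22 ≤ n) :
    (avgPrimeCount (avgPrime (n + 1) ^ 2) : ℝ) - (avgPrimeCount (avgPrime n ^ 2) : ℝ) > 4 := by
  have hA : (791 / 22 : ℝ) ≤ avgPrime n := by
    have h := avg_mono 22 n (by omega) hn
    rw [avg_T 22 (by rw [S22.2.2.2]; omega), S22.1] at h
    exact_mod_cast h
  have hg := gap_lower n (by omega)
  set A := avgPrime n with hAdef
  set B := avgPrime (n + 1)
  obtain ⟨M, hM1, hM, hM'⟩ : ∃ M : ℕ, 1 ≤ M ∧ avgPrime M ≤ A ^ 2 ∧ A ^ 2 < avgPrime (M + 1) := by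
    have hx : ∃ i : ℕ, A ^ 2 < avgPrime (i + 1) := by
      refine ⟨⌊A ^ 2⌋₊, (Nat.lt_floor_add_one _).trans_le ?_⟩
      have := avg_ge (⌊A ^ 2⌋₊ + 1) (by omega)
      push_cast at this
      exact this
    classical
    have hs := Nat.find_spec hx
    have hmin := fun m => @Nat.find_min _ _ hx m
    set M := Nat.find hx
    have hM1 : 1 ≤ M := by
      by_contra h0
      have h0' : M = 0 := by omega
      have := avg_mono 1 n le_rfl (by omega)
      rw [h0'] at hs
      simp only [zero_add] at hs
      nlinarith
    refine ⟨M, hM1, ?_, hs⟩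
    have := hmin (M - 1) (by omega)
    rw [show M - 1 + 1 = M by omega] at this
    exact not_lt.1 this
  have hMx : (M : ℝ) ≤ A ^ 2 := (avg_ge M hM1).trans hM
  set t := (2 * A + 1) / 5 with ht
  have ht1 : 29 / 2 ≤ t := by rw [ht]; linarith
  have key : ∀ j : ℕ, j ≤ 4 → avgPrime (M + j + 1) ≤ avgPrime (M + j) + t := by
    intro j hj
    have h1 := avg_step (M + j) (by omega)
    have hj' : (j : ℝ) ≤ 4 := by exact_mod_cast hj
    have h2 := ratio_bound t (M + j) (by omega) ht1 (by
      push_cast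
      rw [ht]; nlinarith)
    have h3 : (1 : ℝ) ≤ avgPrime (M + j) := by
      have h4 := avg_ge (M + j) (by omega)
      have h5 : (1 : ℝ) ≤ ((M + j : ℕ) : ℝ) := by exact_mod_cast (by omega : 1 ≤ M + j)
      linarith
    have h6 : ((P (M + j) : ℝ) - avgPrime (M + j)) / (((M + j : ℕ) : ℝ) + 1) ≤
        ((P (M + j) : ℝ) - 1) / (((M + j : ℕ) : ℝ) + 1) := by gcongr
    linarith
  apply count_lemma _ _ M _ hM'
  · have h0 := key 0 (by omega)
    have h1 := key 1 (by omega)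
    have h2 := key 2 (by omega)
    have h3 := key 3 (by omega)
    have h4 := key 4 (by omega)
    simp only [add_zero, add_assoc, Nat.reduceAdd] at h0 h1 h2 h3 h4
    have : avgPrime (M + 5) ≤ A ^ 2 + 5 * t := by linarith
    have h7 : A ^ 2 + 5 * t = (A + 1) ^ 2 := by rw [ht]; ring
    rw [h7] at this
    exact this.trans (pow_le_pow_left₀ (by linarith) hg 2)
  · exact pow_le_pow_left₀ (by linarith) (by linarith) 2

end AvgBrocard

theorem stmt15 (n : ℕ) (hn : 4 ≤ n) :
    (avgPrimeCount (avgPrime (n + 1) ^ 2) : ℝ) - (avgPrimeCount (avgPrime n ^ 2) : ℝ) > 4 := by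
  rcases Nat.lt_or_ge n 22 with h | h
  · exact AvgBrocard.small n hn h
  · exact AvgBrocard.large n h
end

section
/- For every integer n ≥ 1, the averaged-prime analogue of the Firoozbakht conjecture holds: (p̄_{n+1})^{1/(n+1)} < (p̄_n)^{1/n}; equivalently, n·ln p̄_{n+1} < (n+1)·ln p̄_n. -/
open Finset Real

lemma prime_iff_cop (k : ℕ) (h1 : 37 ≤ k) (h2 : k < 1369) :
    Nat.Prime k ↔ Nat.gcd k (2*3*5*7*11*13*17*19*23*29*31) = 1 := by
  constructor
  · intro hp
    have := (Nat.Prime.coprime_iff_not_dvd (n := 2*3*5*7*11*13*17*19*23*29*31) hp).2 (by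
      intro hd
      simp only [hp.dvd_mul] at hd
      have h : ∀ c, 0 < c → c < 37 → ¬ k ∣ c := fun c hc h hd => by
        have := Nat.le_of_dvd hc hd
        omega
      have := h 2; have := h 3; have := h 5; have := h 7; have := h 11; have := h 13
      have := h 17; have := h 19; have := h 23; have := h 29; have := h 31
      simp_all)
    exact this
  · intro hg
    by_contra hp
    have hsq := Nat.minFac_sq_le_self (by omega) hp
    have hm := Nat.minFac_prime (n := k) (by omega)
    have hdk := Nat.minFac_dvd k
    have hlt : k.minFac < 37 := by nlinarith
    have hd : k.minFac ∣ 2*3*5*7*11*13*17*19*23*29*31 := by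
      generalize k.minFac = m at *
      clear hg hsq hdk
      interval_cases m <;> first | decide | (revert hm; decide)
    have := Nat.dvd_gcd hdk hd
    rw [hg] at this
    exact hm.one_lt.ne' (Nat.dvd_one.1 this)

lemma count_fast (j : ℕ) (hj : j ≤ 1300) : Nat.count Nat.Prime (37 + j) =
    11 + Nat.count (fun k => Nat.gcd (37 + k) (2*3*5*7*11*13*17*19*23*29*31) = 1) j := by
  rw [Nat.count_add, show Nat.count Nat.Prime 37 = 11 by decide +kernel,
    Nat.count_eq_card_filter_range, Nat.count_eq_card_filter_range]
  congr 2
  apply Finset.filter_congr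
  intro x hx
  rw [Finset.mem_range] at hx
  exact prime_iff_cop (37 + x) (by omega) (by omega)

lemma count_base : ∀ m < 37, 15 * Nat.count Nat.Prime m ≤ 4*m+40 := by decide +kernel

lemma count_step (m : ℕ) (hm : 7 ≤ m) : Nat.count Nat.Prime (m+30) ≤ Nat.count Nat.Prime m + 8 := by
  rw [Nat.count_add, Nat.count_eq_card_filter_range (fun k => Nat.Prime (m+k))]
  have h := Nat.filter_coprime_Ico_eq_totient 30 m
  have h30 : Nat.totient 30 = 8 := by decide +kernel
  rw [h30] at h
  rw [add_le_add_iff_left, ← h]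
  apply Finset.card_le_card_of_injOn (fun k => m + k)
  · intro k hk
    simp only [coe_filter, mem_range, Set.mem_ofPred_eq, mem_Ico] at hk ⊢
    refine ⟨by omega, ?_⟩
    rw [Nat.coprime_comm, Nat.Prime.coprime_iff_not_dvd hk.2]
    intro hd
    have := Nat.le_of_dvd (by norm_num) hd
    obtain ⟨hk1, hk2⟩ := hk
    have h7 : 7 ≤ m + k := by omega
    clear h
    generalize m + k = p at *
    interval_cases p <;> revert hk2 hd <;> norm_num
  · intro a _ b _ h; simpa using h

lemma count_le (m : ℕ) : 15 * Nat.count Nat.Prime m ≤ 4*m+40 := by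
  induction m using Nat.strong_induction_on with
  | _ m ih =>
    by_cases h : m < 37
    · exact count_base m h
    · obtain ⟨k, rfl⟩ : ∃ k, m = k + 30 := ⟨m-30, by omega⟩
      have := ih k (by omega)
      have := count_step k (by omega)
      omega

lemma q_ge (i : ℕ) : 15 * i ≤ 4 * Nat.nth Nat.Prime i + 40 := by
  have := count_le (Nat.nth Nat.Prime i)
  rwa [Nat.count_nth_of_infinite Nat.infinite_setOfPred_prime] at this

noncomputable def SS (n : ℕ) : ℝ := ∑ i ∈ Finset.range n, (Nat.nth Nat.Prime i : ℝ)

lemma SS_ge (n : ℕ) : (n:ℝ) * (15 * n - 95) ≤ 8 * SS n := by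
  unfold SS
  induction n with
  | zero => simp
  | succ n ih =>
    rw [Finset.sum_range_succ]
    have : (15 * n : ℝ) ≤ 4 * Nat.nth Nat.Prime n + 40 := by exact_mod_cast q_ge n
    push_cast
    nlinarith

lemma avg_eq (n : ℕ) : avgPrime n = SS n / n := by
  unfold avgPrime SS nthPrime
  rw [one_div_mul_eq_div]
  congr 1
  rw [Finset.range_eq_Ico, Finset.sum_Ico_eq_sum_range, ← Finset.Ico_add_one_right_eq_Icc, Finset.sum_Ico_eq_sum_range]
  simp

lemma crit (n : ℕ) (hn : 1 ≤ n) (a : ℝ) (ha : avgPrime n = a) (ha1 : 1 < a)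
    (h : n * (Nat.nth Nat.Prime n - a) < (n+1) * (a * Real.log a)) :
    avgPrime (n + 1) ^ (1 / ((n : ℝ) + 1)) < avgPrime n ^ (1 / (n : ℝ)) := by
  have hn0 : (0:ℝ) < n := by exact_mod_cast hn
  have hS : SS n = n * a := by rw [← ha, avg_eq]; field_simp
  have hb : avgPrime (n+1) = (n * a + Nat.nth Nat.Prime n) / (n+1) := by
    rw [avg_eq, ← hS]; unfold SS; rw [Finset.sum_range_succ]; push_cast; rfl
  set q : ℝ := ((Nat.nth Nat.Prime n : ℕ) : ℝ)
  have hq : 0 ≤ q := Nat.cast_nonneg _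
  have hbpos : 0 < avgPrime (n+1) := by rw [hb]; positivity
  rw [ha]
  rw [← Real.log_lt_log_iff (by positivity) (by positivity), Real.log_rpow hbpos, Real.log_rpow (by positivity)]
  have h1 : Real.log (avgPrime (n+1)) ≤ Real.log a + (q - a) / ((n+1)*a) := by
    have := Real.log_le_sub_one_of_pos (x := avgPrime (n+1) / a) (by positivity)
    rw [Real.log_div hbpos.ne' (by positivity)] at this
    have e : avgPrime (n+1) / a - 1 = (q - a) / ((n+1)*a) := by
      rw [hb]; field_simp; ring
    linarith
  have h2 : n * ((q - a) / ((n+1)*a)) < Real.log a := by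
    rw [mul_div_assoc', div_lt_iff₀ (by positivity)]; linarith
  rw [one_div_mul_eq_div, one_div_mul_eq_div, div_lt_div_iff₀ (by positivity) hn0]
  nlinarith

lemma crit2 (n : ℕ) (hn : 1 ≤ n) (A : ℝ) (hA : 1 ≤ A) (h8 : 8 * A ≤ 15 * n - 95)
    (h : Nat.nth Nat.Prime n ≤ A * (1 + Real.log A)) :
    avgPrime (n + 1) ^ (1 / ((n : ℝ) + 1)) < avgPrime n ^ (1 / (n : ℝ)) := by
  have hn0 : (0:ℝ) < n := by exact_mod_cast hn
  have hlogA := Real.log_nonneg hA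
  have haA : A ≤ avgPrime n := by
    rw [avg_eq, le_div_iff₀ hn0]; have := SS_ge n; nlinarith
  have ha1 : 1 < avgPrime n := by
    rcases hA.lt_or_eq with h' | h'
    · linarith
    · subst h'
      have := (Nat.prime_nth_prime n).two_le
      have : (2:ℝ) ≤ Nat.nth Nat.Prime n := by exact_mod_cast this
      simp at h; linarith
  apply crit n hn _ rfl ha1
  have hl : Real.log A ≤ Real.log (avgPrime n) := Real.log_le_log (by linarith) haA
  have hl2 := Real.log_pos ha1
  set a := avgPrime n
  have : (Nat.nth Nat.Prime n : ℝ) ≤ a * (1 + Real.log a) := h.trans (by gcongr)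
  have h3 : 0 < a * Real.log a := by positivity
  nlinarith

lemma block (n n1 n2 P k : ℕ) (h1 : n1 ≤ n) (h2 : n < n2) (hP : n2 ≤ Nat.count Nat.Prime (P+1))
    (hk : 8 * 2 ^ k + 95 ≤ 15 * n1) (A : ℚ) (hA : 2 ^ k ≤ A) (hA8 : 8 * A + 95 ≤ 15 * n1)
    (hPA : P ≤ A * (1 + k * 0.693)) :
    avgPrime (n + 1) ^ (1 / ((n : ℝ) + 1)) < avgPrime n ^ (1 / (n : ℝ)) := by
  have hA' : (2:ℝ)^k ≤ A := by exact_mod_cast hA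
  have hA8' : (8:ℝ) * A + 95 ≤ 15 * n1 := by exact_mod_cast hA8
  have hPA' : (P:ℝ) ≤ A * (1 + k * 0.693) := by
    have : ((P:ℚ):ℝ) ≤ ((A * (1 + k * 0.693) : ℚ) : ℝ) := by exact_mod_cast hPA
    push_cast at this; norm_num at this ⊢; exact this
  have h1' : (n1:ℝ) ≤ n := by exact_mod_cast h1
  have h21 : (1:ℝ) ≤ 2^k := one_le_pow₀ (by norm_num)
  apply crit2 n (by omega) A (by linarith) (by linarith)
  have hq : Nat.nth Nat.Prime n < P + 1 := Nat.nth_lt_of_lt_count (by omega)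
  have hq' : (Nat.nth Nat.Prime n : ℝ) ≤ P := by exact_mod_cast Nat.lt_succ_iff.mp hq
  have hl : k * Real.log 2 ≤ Real.log A := by
    rw [← Real.log_pow]; exact Real.log_le_log (by positivity) hA'
  have := Real.log_two_gt_d9
  have : (k:ℝ) * 0.693 ≤ k * Real.log 2 := by gcongr; linarith
  refine hq'.trans (hPA'.trans ?_)
  have : (0:ℝ) ≤ A := by linarith
  gcongr
  linarith

lemma large (n : ℕ) (hn : 170 ≤ n) :
    avgPrime (n + 1) ^ (1 / ((n : ℝ) + 1)) < avgPrime n ^ (1 / (n : ℝ)) := by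
  have hx1 : 1000 ≤ Nat.nth Nat.Prime n := by
    rw [← Nat.count_le_iff_le_nth Nat.infinite_setOfPred_prime]
    refine le_trans ?_ hn
    rw [show 1000 = 37 + 963 by norm_num, count_fast _ (by norm_num)]
    decide +kernel
  have h1 := Chebyshev.psi_ge (Nat.nth Nat.Prime n)
  have h2 := Chebyshev.psi_le_primeCounting_mul_log (Nat.nth Nat.Prime n)
  have h3 : Nat.primeCounting (Nat.nth Nat.Prime n) = n + 1 :=
    Nat.count_nth_succ_of_infinite Nat.infinite_setOfPred_prime n
  rw [h3] at h2
  have hx : (1000:ℝ) ≤ Nat.nth Nat.Prime n := by exact_mod_cast hx1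
  have hn' : (170:ℝ) ≤ n := by exact_mod_cast hn
  apply crit2 n (by omega) ((15 * n - 95)/8) (by linarith) (by linarith)
  set x : ℝ := ((Nat.nth Nat.Prime n : ℕ) : ℝ)
  set A : ℝ := (15 * n - 95)/8 with hA
  set L := Real.log x with hL
  push_cast at h2
  have h4 : Real.log (x+1) ≤ L + 0.001 := by
    have := Real.log_le_sub_one_of_pos (x := (x+1)/x) (by positivity)
    rw [Real.log_div (by positivity) (by positivity)] at this
    have e : (x+1)/x - 1 ≤ 0.001 := by
      rw [add_div, div_self (by positivity)]
      have : 1 / x ≤ 1/1000 := by gcongr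
      norm_num at this ⊢; linarith
    linarith
  have l2 := Real.log_two_gt_d9
  have l2' := Real.log_two_lt_d9
  have h5 : L ≤ 6 + x / 1000 := by
    have := Real.log_le_sub_one_of_pos (x := x/1024) (by positivity)
    rw [Real.log_div (by positivity) (by positivity), show (1024:ℝ) = 2^10 by norm_num, Real.log_pow] at this
    push_cast at this
    linarith
  have hL1 : 1 ≤ L := by
    rw [hL, Real.le_log_iff_exp_le (by positivity)]
    have := Real.exp_one_lt_d9
    linarith
  have h6 : 1.15 * x ≤ A * L := by
    rw [hA]; nlinarith
  have h7 : 1.15 * x / L ≤ A := by rw [div_le_iff₀ (by positivity)]; exact h6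
  have h8 : Real.log 1.15 + L - Real.log L ≤ Real.log A := by
    have := Real.log_le_log (by positivity) h7
    rwa [Real.log_div (by positivity) (by positivity), Real.log_mul (by norm_num) (by positivity)] at this
  have h9 : Real.log L ≤ L / 8 + 1.0795 := by
    have := Real.log_le_sub_one_of_pos (x := L/8) (by positivity)
    rw [Real.log_div (by positivity) (by positivity), show (8:ℝ) = 2^3 by norm_num, Real.log_pow] at this
    push_cast at this
    linarith
  have h10 : 0.13 ≤ Real.log 1.15 := by
    have := Real.one_sub_inv_le_log_of_pos (x := 1.15) (by norm_num)
    norm_num at this ⊢; linarith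
  have h11 : L / 1.15 ≤ 1 + Real.log A := by
    rw [div_le_iff₀ (by norm_num)]; linarith
  calc x = (1.15 * x / L) * (L / 1.15) := by field_simp
    _ ≤ A * (1 + Real.log A) := by gcongr; exact le_trans (by positivity) h7

lemma nthp (k p : ℕ) (hp : p.Prime) (h : Nat.count Nat.Prime p = k) : Nat.nth Nat.Prime k = p := by
  subst h; exact Nat.nth_count hp

lemma small (n S p k d : ℕ) (hn : 1 ≤ n) (hS : SS n = S) (hp : p.Prime) (hc : Nat.count Nat.Prime p = n)
    (hd : 0 < d) (h1 : n < S) (hk : n ^ d * 2 ^ k ≤ S ^ d) (h : n * (n * p - S) * d * 1000 < (n+1) * S * k * 693 ) :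
    avgPrime (n + 1) ^ (1 / ((n : ℝ) + 1)) < avgPrime n ^ (1 / (n : ℝ)) := by
  have hn0 : (0:ℝ) < n := by exact_mod_cast hn
  have hS1 : (n:ℝ) < S := by exact_mod_cast h1
  have hd0 : (0:ℝ) < d := by exact_mod_cast hd
  have hSp : (0:ℝ) < S := by linarith
  apply crit n hn (S / n) (by rw [avg_eq, hS]) (by rw [lt_div_iff₀ hn0]; linarith)
  rw [nthp n p hp hc]
  have hk' : (n:ℝ)^d * 2^k ≤ (S:ℝ)^d := by exact_mod_cast hk
  have hl : k * 0.693 ≤ d * Real.log (S/n) := by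
    have : (2:ℝ)^k ≤ (S/n:ℝ)^d := by rw [div_pow, le_div_iff₀ (by positivity)]; linarith
    have := Real.log_le_log (by positivity) this
    rw [Real.log_pow, Real.log_pow] at this
    have l2 := Real.log_two_gt_d9
    have : (k:ℝ) * 0.693 ≤ k * Real.log 2 := by gcongr; linarith
    linarith
  have h' : (n:ℝ) * (n * p - S) * d * 1000 < (n+1) * S * k * 693 := by
    have a1 : ((n * (n * p - S) * d * 1000 : ℕ) : ℝ) < (((n+1) * S * k * 693 : ℕ) : ℝ) := by exact_mod_cast h
    have a2 : (n * p : ℝ) - S ≤ ((n * p - S : ℕ) : ℝ) := by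
      have : n * p ≤ (n * p - S) + S := by omega
      have : (n * p : ℝ) ≤ (n * p - S : ℕ) + S := by exact_mod_cast this
      linarith
    push_cast at a1
    refine lt_of_le_of_lt ?_ a1
    gcongr
  have e1 : (n:ℝ) * (p - S/n) = n * (n * p - S) * d * 1000 / (n * d * 1000) := by field_simp
  rw [e1, div_lt_iff₀ (by positivity)]
  refine lt_of_lt_of_le h' ?_
  have e2 : ((n:ℝ)+1) * (S / n * Real.log (S/n)) * (n * d * 1000) = (n+1) * S * 1000 * (d * Real.log (S/n)) := by
    field_simp
  rw [e2]
  have : ((n:ℝ)+1) * S * 1000 * (k * 0.693) ≤ (n+1) * S * 1000 * (d * Real.log (S/n)) := by gcongr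
  linarith

lemma SS_succ (n s p : ℕ) (h : SS n = s) (hp : p.Prime) (hc : Nat.count Nat.Prime p = n) :
    SS (n+1) = (s + p : ℕ) := by
  have := nthp n p hp hc
  unfold SS at *
  rw [Finset.sum_range_succ, h, this]; push_cast; rfl

theorem stmt16 (n : ℕ) (hn : 1 ≤ n) :
    avgPrime (n + 1) ^ (1 / ((n : ℝ) + 1)) < avgPrime n ^ (1 / (n : ℝ)) := by
  by_cases hl : 170 ≤ n
  · exact large n hl
  by_cases hs : n < 18
  · have s0 : SS 0 = (0:ℕ) := by simp [SS]
    have s1 := SS_succ 0 _ 2 s0 (by norm_num) (by decide +kernel)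
    have s2 := SS_succ 1 _ 3 s1 (by norm_num) (by decide +kernel)
    have s3 := SS_succ 2 _ 5 s2 (by norm_num) (by decide +kernel)
    have s4 := SS_succ 3 _ 7 s3 (by norm_num) (by decide +kernel)
    have s5 := SS_succ 4 _ 11 s4 (by norm_num) (by decide +kernel)
    have s6 := SS_succ 5 _ 13 s5 (by norm_num) (by decide +kernel)
    have s7 := SS_succ 6 _ 17 s6 (by norm_num) (by decide +kernel)
    have s8 := SS_succ 7 _ 19 s7 (by norm_num) (by decide +kernel)
    have s9 := SS_succ 8 _ 23 s8 (by norm_num) (by decide +kernel)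
    have s10 := SS_succ 9 _ 29 s9 (by norm_num) (by decide +kernel)
    have s11 := SS_succ 10 _ 31 s10 (by norm_num) (by decide +kernel)
    have s12 := SS_succ 11 _ 37 s11 (by norm_num) (by decide +kernel)
    have s13 := SS_succ 12 _ 41 s12 (by norm_num) (by decide +kernel)
    have s14 := SS_succ 13 _ 43 s13 (by norm_num) (by decide +kernel)
    have s15 := SS_succ 14 _ 47 s14 (by norm_num) (by decide +kernel)
    have s16 := SS_succ 15 _ 53 s15 (by norm_num) (by decide +kernel)
    have s17 := SS_succ 16 _ 59 s16 (by norm_num) (by decide +kernel)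
    interval_cases n
    · exact small 1 _ 3 1 1 (by norm_num) s1 (by norm_num) (by decide +kernel) (by norm_num) (by norm_num) (by norm_num) (by norm_num)
    · exact small 2 _ 5 5 4 (by norm_num) s2 (by norm_num) (by decide +kernel) (by norm_num) (by norm_num) (by norm_num) (by norm_num)
    · exact small 3 _ 7 3 2 (by norm_num) s3 (by norm_num) (by decide +kernel) (by norm_num) (by norm_num) (by norm_num) (by norm_num)
    · exact small 4 _ 11 2 1 (by norm_num) s4 (by norm_num) (by decide +kernel) (by norm_num) (by norm_num) (by norm_num) (by norm_num)
    · exact small 5 _ 13 2 1 (by norm_num) s5 (by norm_num) (by decide +kernel) (by norm_num) (by norm_num) (by norm_num) (by norm_num)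
    · exact small 6 _ 17 2 1 (by norm_num) s6 (by norm_num) (by decide +kernel) (by norm_num) (by norm_num) (by norm_num) (by norm_num)
    · exact small 7 _ 19 3 1 (by norm_num) s7 (by norm_num) (by decide +kernel) (by norm_num) (by norm_num) (by norm_num) (by norm_num)
    · exact small 8 _ 23 3 1 (by norm_num) s8 (by norm_num) (by decide +kernel) (by norm_num) (by norm_num) (by norm_num) (by norm_num)
    · exact small 9 _ 29 3 1 (by norm_num) s9 (by norm_num) (by decide +kernel) (by norm_num) (by norm_num) (by norm_num) (by norm_num)
    · exact small 10 _ 31 3 1 (by norm_num) s10 (by norm_num) (by decide +kernel) (by norm_num) (by norm_num) (by norm_num) (by norm_num)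
    · exact small 11 _ 37 3 1 (by norm_num) s11 (by norm_num) (by decide +kernel) (by norm_num) (by norm_num) (by norm_num) (by norm_num)
    · exact small 12 _ 41 3 1 (by norm_num) s12 (by norm_num) (by decide +kernel) (by norm_num) (by norm_num) (by norm_num) (by norm_num)
    · exact small 13 _ 43 3 1 (by norm_num) s13 (by norm_num) (by decide +kernel) (by norm_num) (by norm_num) (by norm_num) (by norm_num)
    · exact small 14 _ 47 3 1 (by norm_num) s14 (by norm_num) (by decide +kernel) (by norm_num) (by norm_num) (by norm_num) (by norm_num)
    · exact small 15 _ 53 4 1 (by norm_num) s15 (by norm_num) (by decide +kernel) (by norm_num) (by norm_num) (by norm_num) (by norm_num)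
    · exact small 16 _ 59 4 1 (by norm_num) s16 (by norm_num) (by decide +kernel) (by norm_num) (by norm_num) (by norm_num) (by norm_num)
    · exact small 17 _ 61 4 1 (by norm_num) s17 (by norm_num) (by decide +kernel) (by norm_num) (by norm_num) (by norm_num) (by norm_num)
  have hs' : 18 ≤ n := by omega
  by_cases h22 : n < 22
  · exact block n 18 22 79 4 (by omega) (by omega) (by rw [show 79+1 = 37 + 43 by norm_num, count_fast _ (by norm_num)]; decide +kernel) (by norm_num) (175/8) (by norm_num) (by norm_num) (by norm_num)
  by_cases h29 : n < 29
  · exact block n 22 29 109 4 (by omega) (by omega) (by rw [show 109+1 = 37 + 73 by norm_num, count_fast _ (by norm_num)]; decide +kernel) (by norm_num) (235/8) (by norm_num) (by norm_num) (by norm_num)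
  by_cases h42 : n < 42
  · exact block n 29 42 181 5 (by omega) (by omega) (by rw [show 181+1 = 37 + 145 by norm_num, count_fast _ (by norm_num)]; decide +kernel) (by norm_num) (340/8) (by norm_num) (by norm_num) (by norm_num)
  by_cases h68 : n < 68
  · exact block n 42 68 337 6 (by omega) (by omega) (by rw [show 337+1 = 37 + 301 by norm_num, count_fast _ (by norm_num)]; decide +kernel) (by norm_num) (535/8) (by norm_num) (by norm_num) (by norm_num)
  by_cases h108 : n < 108
  · exact block n 68 108 593 6 (by omega) (by omega) (by rw [show 593+1 = 37 + 557 by norm_num, count_fast _ (by norm_num)]; decide +kernel) (by norm_num) (925/8) (by norm_num) (by norm_num) (by norm_num)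
  exact block n 108 186 1109 7 (by omega) (by omega) (by rw [show 1109+1 = 37 + 1073 by norm_num, count_fast _ (by norm_num)]; decide +kernel) (by norm_num) (1525/8) (by norm_num) (by norm_num) (by norm_num)
end

section
/- For every integer n ≥ 1, the averaged-prime analogue of the Fourges conjecture holds: (ln p̄_{n+1} / ln p̄_n)^n < e, where e is Euler's number. -/
open Finset Real

namespace Stmt17Aux

lemma logstep (n : ℕ) (a b : ℝ) (ha : 1 < a) (hab : a ≤ b)
    (h : (n : ℝ) * (b - a) < a * Real.log a) :
    (Real.log b / Real.log a) ^ n < Real.exp 1 := by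
  have hla : 0 < Real.log a := Real.log_pos ha
  have ha0 : 0 < a := by linarith
  have hb0 : 0 < b := by linarith
  have h1 : Real.log b - Real.log a ≤ (b - a) / a := by
    rw [← Real.log_div hb0.ne' ha0.ne']
    have := Real.log_le_sub_one_of_pos (div_pos hb0 ha0)
    have e : (b - a) / a = b / a - 1 := by field_simp
    linarith
  have hlb : 0 < Real.log b := Real.log_pos (by linarith)
  have h2 : Real.log b / Real.log a ≤ Real.exp ((b - a) / (a * Real.log a)) := by
    have h3 := Real.add_one_le_exp ((b - a) / (a * Real.log a))
    have h4 : Real.log b / Real.log a ≤ (b - a) / (a * Real.log a) + 1 := by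
      rw [div_le_iff₀ hla]
      have : ((b - a) / (a * Real.log a) + 1) * Real.log a = (b - a) / a + Real.log a := by
        field_simp
      linarith
    linarith
  calc (Real.log b / Real.log a) ^ n ≤ (Real.exp ((b - a) / (a * Real.log a))) ^ n :=
        pow_le_pow_left₀ (by positivity) h2 n
    _ = Real.exp (n * ((b - a) / (a * Real.log a))) := by rw [← Real.exp_nat_mul]
    _ < Real.exp 1 := by
        apply Real.exp_lt_exp.mpr
        rw [← mul_div_assoc, div_lt_one (by positivity)]
        exact h

def chk (n p s : ℕ) : Bool :=
  p ≤ 2 || (decide (2 * n ≤ s) && decide (100 * n * (n * p) < 69 * (n + 1) * s + 100 * n * s)) ||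
  (decide (3 * n ≤ s) && decide (n * (n * p) < (n + 1) * s + n * s)) ||
  (decide (4 * n ≤ s) && decide (1000 * n * (n * p) < 1386 * (n + 1) * s + 1000 * n * s)) ||
  (decide (739 * n ≤ 100 * s) && decide (n * (n * p) < 2 * (n + 1) * s + n * s))

def isP (x : ℕ) : Bool := decide (2 ≤ x) &&
  (List.range' 2 30).all fun d => decide (x ≤ d) || !(x % d == 0)

lemma isP_iff (x : ℕ) (hx : x < 1001) : isP x = true ↔ Nat.Prime x := by
  simp only [isP, Bool.and_eq_true, decide_eq_true_eq, List.all_eq_true, List.mem_range'_1,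
    Bool.or_eq_true, Bool.not_eq_true', beq_eq_false_iff_ne]
  constructor
  · rintro ⟨h2, h⟩
    by_contra hp
    have h1 := Nat.minFac_sq_le_self (by omega) hp
    have h3 := (Nat.minFac_prime (show x ≠ 1 by omega)).two_le
    have h4 : x.minFac < 32 := by nlinarith
    rcases h x.minFac ⟨h3, by omega⟩ with h5 | h5
    · nlinarith
    · exact h5 (Nat.mod_eq_zero_of_dvd (Nat.minFac_dvd x))
  · intro hp
    refine ⟨hp.two_le, fun d hd => ?_⟩
    by_cases hxd : x ≤ d
    · exact Or.inl hxd
    · right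
      intro h
      rcases (Nat.dvd_prime hp).mp (Nat.dvd_of_mod_eq_zero h) with h | h <;> omega

def step (x : ℕ) : ℕ × ℕ × Bool → ℕ × ℕ × Bool
  | (n, s, b) => if isP x = true then (n + 1, s + x, b && chk n x s) else (n, s, b)

def f : ℕ → ℕ × ℕ × Bool
  | 0 => (0, 0, true)
  | x + 1 => step x (f x)

lemma f_val : (f 1000).2.2 = true := by decide +kernel

lemma f_spec (x : ℕ) (hx : x ≤ 1000) : (f x).1 = Nat.count Nat.Prime x ∧
    (f x).2.1 = ∑ i ∈ Finset.range (Nat.count Nat.Prime x), Nat.nth Nat.Prime i ∧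
    ((f x).2.2 = true → ∀ q < x, q.Prime → chk (Nat.count Nat.Prime q) q
      (∑ i ∈ Finset.range (Nat.count Nat.Prime q), Nat.nth Nat.Prime i) = true) := by
  induction x with
  | zero => simp [f]
  | succ x ih =>
    replace ih := ih (by omega)
    have hiff := isP_iff x (by omega)
    simp only [f]
    rcases hfx : f x with ⟨n, s, b⟩
    rw [hfx] at ih
    obtain ⟨h1, h2, h3⟩ := ih
    simp only at h1 h2 h3
    by_cases hp : Nat.Prime x
    · simp only [step, if_pos hp, if_pos (hiff.mpr hp), Nat.count_succ, Finset.sum_range_succ, Nat.nth_count hp]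
      refine ⟨by rw [h1], by rw [h2], ?_⟩
      intro hb q hq hqp
      rw [Bool.and_eq_true] at hb
      rcases Nat.lt_succ_iff_lt_or_eq.mp hq with h | rfl
      · exact h3 hb.1 q h hqp
      · rw [← h2, ← h1]; exact hb.2
    · simp only [step, if_neg hp, if_neg (mt hiff.mp hp), Nat.count_succ, add_zero]
      refine ⟨h1, h2, ?_⟩
      intro hb q hq hqp
      rcases Nat.lt_succ_iff_lt_or_eq.mp hq with h | rfl
      · exact h3 hb q h hqp
      · exact absurd hqp hp

lemma sieve (x : ℕ) : 15 * Nat.count Nat.Prime x ≤ 4 * x + 40 := by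
  induction x using Nat.strong_induction_on with
  | _ x ih =>
    by_cases hx : x < 36
    · clear ih
      rw [← (f_spec x (by omega)).1]
      revert x
      decide +kernel
    · have h1 := ih (x - 30) (by omega)
      have h2 : Nat.count Nat.Prime x ≤ Nat.count Nat.Prime (x - 30) + 8 := by
        obtain ⟨k, rfl⟩ : ∃ k, x = k + 30 := ⟨x - 30, by omega⟩
        have hk : 6 ≤ k := by omega
        simp only [Nat.add_sub_cancel]
        rw [Nat.count_eq_card_filter_range, Nat.count_eq_card_filter_range]
        have ht : Nat.totient 30 = 8 := by decide +kernel
        have h3 := Nat.filter_coprime_Ico_eq_totient 30 k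
        rw [ht] at h3
        rw [← h3]
        refine le_trans (Finset.card_le_card ?_) (Finset.card_union_le _ _)
        intro p hp
        simp only [Finset.mem_filter, Finset.mem_range, Finset.mem_union, Finset.mem_Ico] at hp ⊢
        by_cases hpk : p < k
        · left; exact ⟨hpk, hp.2⟩
        · right
          refine ⟨⟨by omega, hp.1⟩, ?_⟩
          rw [Nat.coprime_comm, Nat.Prime.coprime_iff_not_dvd hp.2]
          intro hd
          have : p ∣ 2 * 3 * 5 := hd
          rw [hp.2.dvd_mul, hp.2.dvd_mul] at this
          rcases this with (h | h) | h <;> have := Nat.le_of_dvd (by norm_num) h <;> omega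
      omega

lemma nth_lower (i : ℕ) : 15 * (i + 1) ≤ 4 * Nat.nth Nat.Prime i + 44 := by
  have h := sieve (Nat.nth Nat.Prime i + 1)
  rw [Nat.count_succ, Nat.count_nth_of_infinite Nat.infinite_setOfPred_prime,
    if_pos (Nat.prime_nth_prime i)] at h
  omega

lemma sum_lower (n : ℕ) : 15 * (n * (n + 1)) ≤
    8 * ∑ i ∈ Finset.range n, Nat.nth Nat.Prime i + 88 * n := by
  induction n with
  | zero => simp
  | succ k ih =>
    rw [Finset.sum_range_succ]
    have := nth_lower k
    nlinarith

lemma small_case (n : ℕ) (hn : 1 ≤ n) (p s : ℕ) (hp : 2 < p) (hs : 0 < s) (h : chk n p s = true) :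
    (n : ℝ) * (p - s / n) < (n + 1) * ((s / n : ℝ) * Real.log (s / n)) := by
  have hn0 : (0 : ℝ) < n := by exact_mod_cast hn
  have hs0 : (0 : ℝ) < s := by exact_mod_cast hs
  have key : ∀ t c : ℝ, c * n ≤ s → 0 < c → t ≤ Real.log c →
      (n : ℝ) * (n * p) < t * (n + 1) * s + n * s →
      (n : ℝ) * (p - s / n) < (n + 1) * ((s / n : ℝ) * Real.log (s / n)) := by
    intro t c hc hc0 ht h
    have h1 : c ≤ s / n := by rwa [le_div_iff₀ hn0]
    have h2 : t ≤ Real.log (s / n) := ht.trans (Real.log_le_log hc0 h1)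
    have h3 : (n : ℝ) * (p - s / n) < (n + 1) * ((s / n : ℝ) * t) := by
      have e1 : (n : ℝ) * (p - s / n) = (n * (n * p) - n * s) / n := by field_simp
      have e2 : ((n : ℝ) + 1) * ((s / n : ℝ) * t) = (t * (n + 1) * s) / n := by field_simp
      rw [e1, e2]
      exact div_lt_div_of_pos_right (by linarith) hn0
    refine h3.trans_le ?_
    gcongr
  have l2 := Real.log_two_gt_d9
  simp only [chk, Bool.or_eq_true, Bool.and_eq_true, decide_eq_true_eq] at h
  rcases h with (((h | h) | h) | h) | h
  · omega
  · obtain ⟨h1, h2⟩ := h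
    have h1' : (2 * n : ℝ) ≤ s := by exact_mod_cast h1
    have h2' : (100 * n * (n * p) : ℝ) < 69 * (n + 1) * s + 100 * n * s := by exact_mod_cast h2
    exact key 0.69 2 h1' (by norm_num) (by linarith) (by linarith)
  · obtain ⟨h1, h2⟩ := h
    have h1' : (3 * n : ℝ) ≤ s := by exact_mod_cast h1
    have h2' : (n * (n * p) : ℝ) < (n + 1) * s + n * s := by exact_mod_cast h2
    refine key 1 3 h1' (by norm_num) ?_ (by linarith)
    rw [Real.le_log_iff_exp_le (by norm_num)]
    linarith [Real.exp_one_lt_d9]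
  · obtain ⟨h1, h2⟩ := h
    have h1' : (4 * n : ℝ) ≤ s := by exact_mod_cast h1
    have h2' : (1000 * n * (n * p) : ℝ) < 1386 * (n + 1) * s + 1000 * n * s := by exact_mod_cast h2
    refine key 1.386 4 h1' (by norm_num) ?_ (by linarith)
    rw [show (4 : ℝ) = 2 ^ 2 by norm_num, Real.log_pow]
    push_cast; linarith
  · obtain ⟨h1, h2⟩ := h
    have h1' : (739 * n : ℝ) ≤ 100 * s := by exact_mod_cast h1
    have h2' : (n * (n * p) : ℝ) < 2 * (n + 1) * s + n * s := by exact_mod_cast h2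
    refine key 2 7.39 (by linarith) (by norm_num) ?_ (by linarith)
    rw [Real.le_log_iff_exp_le (by norm_num), show (2 : ℝ) = 1 + 1 by norm_num, Real.exp_add]
    have := Real.exp_one_lt_d9
    have := Real.exp_pos 1
    nlinarith

lemma log5 : Real.log 5 ≤ 2 := by
  rw [Real.log_le_iff_le_exp (by norm_num), show (2 : ℝ) = 1 + 1 by norm_num, Real.exp_add]
  have := Real.exp_one_gt_d9
  nlinarith

lemma large_case (P m a : ℝ) (hP : 1000 ≤ P)
    (hm : (P * Real.log 2 - Real.log (P + 1)) / Real.log P ≤ m)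
    (ha : 15 / 8 * m - 11 ≤ a) : 0 < a ∧ P - a ≤ a * Real.log a := by
  have hP0 : 0 < P := by linarith
  set L := Real.log P with hL
  have l2 := Real.log_two_gt_d9
  have l2' := Real.log_two_lt_d9
  have hL1 : L ≤ P / 1000 + 5.932 := by
    have h1 := Real.log_le_sub_one_of_pos (show 0 < P / 1024 by positivity)
    rw [Real.log_div hP0.ne' (by norm_num), show (1024 : ℝ) = 2 ^ 10 by norm_num, Real.log_pow] at h1
    push_cast at h1
    norm_num at h1
    linarith
  have hL2 : Real.log (P + 1) ≤ L + 0.001 := by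
    have h1 := Real.log_le_sub_one_of_pos (show 0 < (P + 1) / P by positivity)
    rw [Real.log_div (by positivity) hP0.ne'] at h1
    have : (P + 1) / P - 1 ≤ 0.001 := by
      have e : (P + 1) / P - 1 = 1 / P := by field_simp; ring
      rw [e, div_le_iff₀ hP0]; linarith
    linarith
  have hLpos : 0 < L := Real.log_pos (by linarith)
  rw [div_le_iff₀ hLpos] at hm
  have hA : 1.2 * P ≤ a * L := by
    have h1 : (15 / 8 * m - 11) * L ≤ a * L := by gcongr
    nlinarith
  have hA' : 1.2 * P / L ≤ a := by rwa [div_le_iff₀ hLpos]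
  have ha0 : 0 < a := lt_of_lt_of_le (by positivity) hA'
  refine ⟨ha0, ?_⟩
  have hlog : Real.log 1.2 + L - Real.log L ≤ Real.log a := by
    have h1 := Real.log_le_log (by positivity) hA'
    rwa [Real.log_div (by positivity) hLpos.ne', Real.log_mul (by norm_num) hP0.ne'] at h1
  have hLL : Real.log L ≤ L / 6 + Real.log 6 - 1 := by
    have h1 := Real.log_le_sub_one_of_pos (show 0 < L / 6 by positivity)
    rw [Real.log_div hLpos.ne' (by norm_num)] at h1
    linarith
  have h6 : Real.log 6 = Real.log 1.2 + Real.log 5 := by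
    rw [← Real.log_mul (by norm_num) (by norm_num)]; norm_num
  have h5 := log5
  have h7 : 5 / 6 * L ≤ 1 + Real.log a := by linarith
  have h8 : P ≤ a * (5 / 6 * L) := by nlinarith
  have h9 : a * (5 / 6 * L) ≤ a * (1 + Real.log a) := by gcongr
  linarith

lemma sum_eq (n : ℕ) : ∑ i ∈ Finset.Icc 1 n, (nthPrime i : ℝ) =
    ((∑ i ∈ Finset.range n, Nat.nth Nat.Prime i : ℕ) : ℝ) := by
  induction n with
  | zero => simp
  | succ k ih =>
    rw [Finset.sum_Icc_succ_top (by omega), ih, Finset.sum_range_succ]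
    simp [nthPrime]

end Stmt17Aux

open Stmt17Aux in
theorem stmt17 (n : ℕ) (hn : 1 ≤ n) :
    (Real.log (avgPrime (n + 1)) / Real.log (avgPrime n)) ^ n < Real.exp 1 := by
  have hn0 : (0 : ℝ) < n := by exact_mod_cast hn
  set P := Nat.nth Nat.Prime n with hP
  set S := ∑ i ∈ Finset.range n, Nat.nth Nat.Prime i with hS
  have hPp : P.Prime := Nat.prime_nth_prime n
  have hcount : Nat.count Nat.Prime P = n := Nat.count_nth_of_infinite Nat.infinite_setOfPred_prime n
  have hSn : 2 * n ≤ S := by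
    have : ∑ i ∈ Finset.range n, 2 ≤ S :=
      Finset.sum_le_sum fun i _ => (Nat.prime_nth_prime i).two_le
    simp at this; omega
  have hSP : S ≤ n * P := by
    have : S ≤ ∑ i ∈ Finset.range n, P := Finset.sum_le_sum fun i hi =>
      (Nat.nth_monotone Nat.infinite_setOfPred_prime) (Finset.mem_range.mp hi).le
    simpa using this
  have hP2 : 2 < P := by
    have h0 : Nat.nth Nat.Prime 0 < P :=
      Nat.nth_strictMono Nat.infinite_setOfPred_prime (by omega)
    have := (Nat.prime_nth_prime 0).two_le
    omega
  have ea : avgPrime n = (S : ℝ) / n := by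
    rw [avgPrime, sum_eq]; ring
  have eb : avgPrime (n + 1) = ((S : ℝ) + P) / (n + 1) := by
    rw [avgPrime, sum_eq, Finset.sum_range_succ, ← hS, ← hP]; push_cast; ring
  have hSn' : (2 * n : ℝ) ≤ S := by exact_mod_cast hSn
  have hSP' : (S : ℝ) ≤ n * P := by exact_mod_cast hSP
  rw [ea, eb]
  have ha2 : (2 : ℝ) ≤ S / n := by rwa [le_div_iff₀ hn0]
  have haP : (S : ℝ) / n ≤ P := by rw [div_le_iff₀ hn0]; linarith
  have hba : ((S : ℝ) + P) / (n + 1) - S / n = (P - S / n) / (n + 1) := by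
    field_simp; ring
  have hla : 0 < Real.log ((S : ℝ) / n) := Real.log_pos (by linarith)
  apply logstep
  · linarith
  · have : 0 ≤ (P - (S : ℝ) / n) / (n + 1) := div_nonneg (by linarith) (by positivity)
    linarith
  rw [hba, ← mul_div_assoc, div_lt_iff₀ (by positivity), mul_comm (_ * Real.log _)]
  by_cases hbig : P < 1000
  · have h := (f_spec 1000 le_rfl).2.2 f_val P hbig hPp
    rw [hcount] at h
    exact small_case n hn P S hP2 (by omega) h
  · have hpi : (Nat.primeCounting P : ℝ) = n + 1 := by
      rw [Nat.primeCounting, Nat.primeCounting', Nat.count_succ, hcount, if_pos hPp]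
      push_cast; rfl
    have h1 := Chebyshev.pi_ge P
    rw [hpi] at h1
    have h2 : (15 * (n * (n + 1)) : ℝ) ≤ 8 * S + 88 * n := by exact_mod_cast sum_lower n
    have h3 : 15 / 8 * ((n : ℝ) + 1) - 11 ≤ S / n := by
      rw [le_div_iff₀ hn0]; linarith
    obtain ⟨h4, h5⟩ := large_case P (n + 1) (S / n) (by exact_mod_cast not_lt.mp hbig) h1 h3
    have h6 : 0 < (S : ℝ) / n * Real.log ((S : ℝ) / n) := by positivity
    nlinarith
end
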